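/- arXiv:1706.09134 — 7 statements merged into one kernel-verified Lean document; each statement's English description precedes it below -/
import Mathlib

section
/- Let φ_1, φ_2 be commuting field automorphisms of k(x,y), let a, d ∈ k(x)[y] with d ≠ 0, and let m, n ∈ ℕ. Then a/(φ_1^m φ_2^n(d)) = φ_1(u) − u + φ_2(v) − v + φ_1^{−m}φ_2^{−n}(a)/d, where u = Σ_{j=0}^{m−1} φ_1^{j−m}(a)/(φ_1^j φ_2^n(d)) and v = Σ_{ℓ=0}^{n−1} φ_2^{ℓ−n}φ_1^{−m}(a)/φ_2^ℓ(d). -/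
/-!
Both sums telescope. For a single automorphism `φ`, applying `φ` to the `j`-th summand
`φ^{j-m}(A)/φ^j(B)` gives the `(j+1)`-st, so `φ(S) - S` is the difference of the end terms
`A/φ^m(B) - φ^{-m}(A)/B` (`telescope_aut`). Taking `φ = φ₁`, `A = a`, `B = φ₂^n(d)`, and then
`φ = φ₂`, `A = φ₁^{-m}(a)`, `B = d`, and adding the two identities, the middle terms
`φ₁^{-m}(a)/φ₂^n(d)` cancel; commutativity is needed only to exchange `φ₁^{-m}` and `φ₂^{-n}`
in the last term.
-/

open Polynomial

noncomputable section

variable (k : Type*) [Field k] [CharZero k]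

/-- `k(x,y)` realized as `k(x)(y)`: rational functions in `y` over `k(x) = RatFunc k`. -/
abbrev F2 := RatFunc (RatFunc k)

/-- The element `x` of `k(x,y)`. -/
def Fx : F2 k := RatFunc.C RatFunc.X

/-- The element `y` of `k(x,y)`. -/
def Fy : F2 k := RatFunc.X

/-- The embedding of the constants `k` into `k(x,y)`. -/
def Fc : k →+* F2 k := RatFunc.C.comp RatFunc.C

/-- The embedding of `k(x)` into `k(x,y)`. -/
def FKx : RatFunc k →+* F2 k := RatFunc.C

/-- The embedding of `k(x)[y]` into `k(x,y)`. -/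
def FP : Polynomial (RatFunc k) →+* F2 k := algebraMap _ _

/-- The embedding of `k[x,y]` (realized as `(k[x])[y]`, outer variable `y`) into `k(x)[y]`. -/
def PP : Polynomial (Polynomial k) →+* Polynomial (RatFunc k) :=
  Polynomial.mapRingHom (algebraMap (Polynomial k) (RatFunc k))

/-- The embedding of `k[y]` into `k[x,y] = (k[x])[y]`. -/
def PY : Polynomial k →+* Polynomial (Polynomial k) :=
  Polynomial.mapRingHom Polynomial.C

/-- The embedding of `k[x,y]` into `k(x,y)`. -/
def FPP : Polynomial (Polynomial k) →+* F2 k := (FP k).comp (PP k)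

/-- The embedding of `k[y]` into `k(x)[y]`. -/
def PYx : Polynomial k →+* Polynomial (RatFunc k) :=
  Polynomial.mapRingHom (algebraMap k (RatFunc k))

variable {k}

/-- `σ` is the shift operator `σ_x : f(x,y) ↦ f(x+1,y)`, i.e. the automorphism of
`k(x,y)` fixing `k(y)` pointwise (equivalently, fixing the generators `k` and `y`)
and sending `x` to `x+1`. -/
def IsShiftX (σ : F2 k ≃+* F2 k) : Prop :=
  (∀ c : k, σ (Fc k c) = Fc k c) ∧ σ (Fy k) = Fy k ∧ σ (Fx k) = Fx k + 1

/-- `σ` is the `q`-shift operator `τ_{x,q} : f(x,y) ↦ f(qx,y)`, i.e. the automorphism of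
`k(x,y)` fixing `k(y)` pointwise and sending `x` to `q·x`. -/
def IsQShiftX (q : k) (σ : F2 k ≃+* F2 k) : Prop :=
  (∀ c : k, σ (Fc k c) = Fc k c) ∧ σ (Fy k) = Fy k ∧ σ (Fx k) = Fc k q * Fx k

/-- `σ` is the shift operator `σ_y : f(x,y) ↦ f(x,y+1)`, i.e. the automorphism of
`k(x,y)` fixing `k(x)` pointwise and sending `y` to `y+1`. -/
def IsShiftY (σ : F2 k ≃+* F2 k) : Prop :=
  (∀ c : k, σ (Fc k c) = Fc k c) ∧ σ (Fx k) = Fx k ∧ σ (Fy k) = Fy k + 1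

/-- `D` is the partial derivation `D_y = ∂/∂y` on `k(x,y)`: the `k(x)`-linear derivation
with `D(y) = 1`. -/
def IsDerivY (D : F2 k → F2 k) : Prop :=
  (∀ a b, D (a + b) = D a + D b) ∧ (∀ a b, D (a * b) = a * D b + D a * b) ∧
  (∀ c : RatFunc k, D (FKx k c) = 0) ∧ D (Fy k) = 1

/-- `q` is not a root of unity. -/
def NotRootOfUnity (q : k) : Prop := ∀ n : ℕ, 0 < n → q ^ n ≠ 1

/-- The telescoping identity for one automorphism. It also holds for `B = 0`, where all the
quotients are `0`. -/
theorem telescope_aut {K : Type*} [Field K] (φ : K ≃+* K) (A B : K) (m : ℕ) :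
    φ (∑ j ∈ Finset.range m, (φ ^ ((j : ℤ) - (m : ℤ))) A / (φ ^ (j : ℤ)) B) -
      ∑ j ∈ Finset.range m, (φ ^ ((j : ℤ) - (m : ℤ))) A / (φ ^ (j : ℤ)) B =
      A / (φ ^ (m : ℤ)) B - (φ ^ (-(m : ℤ))) A / B := by
  have step : ∀ (i : ℤ) (g : K), φ ((φ ^ i) g) = (φ ^ (i + 1)) g := fun i g => by
    rw [add_comm, zpow_add, zpow_one, RingAut.mul_apply]
  have tele := Finset.sum_range_sub
    (fun j : ℕ => (φ ^ ((j : ℤ) - (m : ℤ))) A / (φ ^ (j : ℤ)) B) m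
  simp only [sub_self, zpow_zero, RingAut.one_apply, Nat.cast_zero, zero_sub] at tele
  rw [← tele, map_sum, ← Finset.sum_sub_distrib]
  refine Finset.sum_congr rfl fun j _ => ?_
  rw [map_div₀, step, step, Nat.cast_succ, sub_add_eq_add_sub]

/-- the reduction formula (5): for commuting field automorphisms
`φ₁, φ₂` of `k(x,y)`, `a, d ∈ k(x)[y]` with `d ≠ 0` and `m, n ∈ ℕ`,
`a/φ₁^m φ₂^n(d) = φ₁(u) - u + φ₂(v) - v + φ₁^{-m}φ₂^{-n}(a)/d`, where
`u = Σ_{j=0}^{m-1} φ₁^{j-m}(a)/(φ₁^j φ₂^n(d))` and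
`v = Σ_{l=0}^{n-1} φ₂^{l-n}φ₁^{-m}(a)/φ₂^l(d)`. -/
theorem stmt3 {k : Type*} [Field k] [CharZero k]
    (φ₁ φ₂ : F2 k ≃+* F2 k) (hcomm : ∀ g : F2 k, φ₁ (φ₂ g) = φ₂ (φ₁ g))
    (a d : Polynomial (RatFunc k)) (hd : d ≠ 0) (m n : ℕ)
    (u v : F2 k)
    (hu : u = ∑ j ∈ Finset.range m,
      (φ₁ ^ ((j : ℤ) - (m : ℤ))) (FP k a) / (φ₁ ^ (j : ℤ)) ((φ₂ ^ (n : ℤ)) (FP k d)))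
    (hv : v = ∑ l ∈ Finset.range n,
      (φ₂ ^ ((l : ℤ) - (n : ℤ))) ((φ₁ ^ (-(m : ℤ))) (FP k a)) / (φ₂ ^ (l : ℤ)) (FP k d)) :
    FP k a / (φ₁ ^ (m : ℤ)) ((φ₂ ^ (n : ℤ)) (FP k d)) =
      φ₁ u - u + φ₂ v - v +
        (φ₁ ^ (-(m : ℤ))) ((φ₂ ^ (-(n : ℤ))) (FP k a)) / FP k d := by
  have hc : Commute φ₁ φ₂ := RingEquiv.ext hcomm
  have swap : (φ₁ ^ (-(m : ℤ))) ((φ₂ ^ (-(n : ℤ))) (FP k a)) =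
      (φ₂ ^ (-(n : ℤ))) ((φ₁ ^ (-(m : ℤ))) (FP k a)) :=
    RingEquiv.congr_fun (hc.zpow_zpow (-(m : ℤ)) (-(n : ℤ))).eq (FP k a)
  have h₁ := telescope_aut φ₁ (FP k a) ((φ₂ ^ (n : ℤ)) (FP k d)) m
  have h₂ := telescope_aut φ₂ ((φ₁ ^ (-(m : ℤ))) (FP k a)) (FP k d) n
  rw [← hu] at h₁
  rw [← hv] at h₂
  rw [swap]
  linear_combination -h₁ - h₂
end
end

section
/- Let φ ∈ {σ_x, τ_{x,q}} (with q ∈ k \ {0} not a root of unity in the case φ = τ_{x,q}). Every rational function f ∈ k(x,y) admits a (φ, D_y)-reduced form: there exist g, h ∈ k(x,y), finitely many a_i ∈ k(x)[y] and irreducible d_i ∈ k[x,y] with deg_y(a_i) < deg_y(d_i), the d_i lying in pairwise distinct φ-orbits, such that f = φ(g) − g + D_y(h) + Σ_{i=1}^m a_i/d_i. -/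
/-!
The proof combines Hermite reduction in `y` over the field `k(x)` with telescoping in `x`.

*Hermite reduction.* By partial fractions over `k(x)[y]`, every `f` is a sum of a polynomial in `y`
and of fractions `a / d^n` with `d` irreducible. Polynomials are derivatives in characteristic zero,
and `hermite_prime_pow` lowers `n` to `1` modulo derivatives, using that `d` and `d'` are coprime.
Division with remainder gives `deg_y(a) < deg_y(d)`, and Gauss's lemma
(`exists_integral_irreducible`) replaces `d` by an irreducible polynomial of `k[x,y]`. Hence
`f = D_y(h) + Σ a_i / d_i` (`hermite_mem`).

*Merging orbits.* The automorphism `φ` fixes `y` and restricts to an automorphism of `k(x)`, so its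
powers map `k(x)[y]` to itself and preserve `deg_y` (`coeffAuts_apply`). As `φ^t(u) - u` always has
the form `φ(g) - g` (`zpow_sub_self`), two terms whose denominators share an orbit can be given the
same denominator and then added. Doing this for one term at a time (`reduced_add_term`) produces
denominators in pairwise distinct orbits.
-/


open Polynomial

noncomputable section

variable (k : Type*) [Field k] [CharZero k]

variable {k}

section ReducedForm

set_option linter.unusedSectionVars false

lemma FP_injective : Function.Injective (FP k) :=
  IsFractionRing.injective _ _

lemma FP_ne_zero {p : Polynomial (RatFunc k)} (hp : p ≠ 0) : FP k p ≠ 0 := by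
  simpa using (FP_injective (k := k)).ne hp

lemma FP_C (r : RatFunc k) : FP k (Polynomial.C r) = FKx k r :=
  RatFunc.algebraMap_C r

lemma FP_X : FP k Polynomial.X = Fy k := RatFunc.algebraMap_X

lemma degree_PP (d : Polynomial (Polynomial k)) : (PP k d).degree = d.degree :=
  Polynomial.degree_map_eq_of_injective (IsFractionRing.injective _ _) d

/-! ### Automorphisms acting on the coefficients -/

/-- The automorphisms of `k(x,y)` that fix `y` and restrict to an automorphism of `k(x)`. -/
def coeffAuts (k : Type*) [Field k] : Subgroup (F2 k ≃+* F2 k) where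
  carrier := {σ | σ (Fy k) = Fy k ∧ (∀ r, ∃ s, σ (FKx k r) = FKx k s) ∧
    ∀ r, ∃ s, σ⁻¹ (FKx k r) = FKx k s}
  one_mem' := ⟨rfl, fun r => ⟨r, rfl⟩, fun r => ⟨r, rfl⟩⟩
  mul_mem' := by
    rintro σ τ ⟨h1, h2, h3⟩ ⟨h4, h5, h6⟩
    refine ⟨?_, fun r => ?_, fun r => ?_⟩
    · rw [RingAut.mul_apply, h4, h1]
    · obtain ⟨s, hs⟩ := h5 r
      obtain ⟨t, ht⟩ := h2 s
      exact ⟨t, by rw [RingAut.mul_apply, hs, ht]⟩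
    · obtain ⟨s, hs⟩ := h3 r
      obtain ⟨t, ht⟩ := h6 s
      exact ⟨t, by rw [mul_inv_rev, RingAut.mul_apply, hs, ht]⟩
  inv_mem' := by
    rintro σ ⟨h1, h2, h3⟩
    refine ⟨?_, h3, by simpa using h2⟩
    exact (RingEquiv.symm_apply_eq σ).2 h1.symm

/-- It suffices to test on the generator `x`: the elements of `k(x)` sent into `k(x)` form a
subfield. -/
lemma maps_coeff {σ : F2 k ≃+* F2 k} (hc : ∀ c : k, σ (Fc k c) = Fc k c)
    (hx : ∃ s, σ (Fx k) = FKx k s) (r : RatFunc k) : ∃ s, σ (FKx k r) = FKx k s := by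
  have hpoly : ∀ p : Polynomial k, ∃ s, σ (FKx k (algebraMap _ _ p)) = FKx k s := by
    intro p
    induction p using Polynomial.induction_on' with
    | add p q hp hq =>
      obtain ⟨s, hs⟩ := hp
      obtain ⟨t, ht⟩ := hq
      exact ⟨s + t, by rw [map_add, map_add, map_add, hs, ht, map_add]⟩
    | monomial n a =>
      obtain ⟨s, hs⟩ := hx
      refine ⟨RatFunc.C a * s ^ n, ?_⟩
      rw [← Polynomial.C_mul_X_pow_eq_monomial, map_mul, map_pow, RatFunc.algebraMap_C,
        RatFunc.algebraMap_X, map_mul, map_mul, map_pow, map_pow, map_mul, map_pow]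
      have h1 : σ (FKx k (RatFunc.C a)) = FKx k (RatFunc.C a) := hc a
      have h2 : σ (FKx k RatFunc.X) = FKx k s := hs
      rw [h1, h2]
  obtain ⟨s, hs⟩ := hpoly r.num
  obtain ⟨t, ht⟩ := hpoly r.denom
  refine ⟨s / t, ?_⟩
  conv_lhs => rw [← RatFunc.num_div_denom r]
  rw [map_div₀, map_div₀, hs, ht, map_div₀]

lemma mem_coeffAuts {φ : F2 k ≃+* F2 k}
    (hφ : IsShiftX φ ∨ ∃ q : k, q ≠ 0 ∧ NotRootOfUnity q ∧ IsQShiftX q φ) :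
    φ ∈ coeffAuts k := by
  rcases hφ with ⟨hc, hy, hx⟩ | ⟨q, hq, -, hc, hy, hx⟩
  · refine ⟨hy, maps_coeff hc ⟨RatFunc.X + 1, ?_⟩, maps_coeff (fun c => ?_) ⟨RatFunc.X - 1, ?_⟩⟩
    · rw [hx, map_add, map_one]; rfl
    · exact (RingEquiv.symm_apply_eq φ).2 (hc c).symm
    · refine (RingEquiv.symm_apply_eq φ).2 ?_
      have : FKx k (RatFunc.X - 1) = Fx k - 1 := by rw [map_sub, map_one]; rfl
      rw [this, map_sub, map_one, hx, add_sub_cancel_right]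
  · refine ⟨hy, maps_coeff hc ⟨RatFunc.C q * RatFunc.X, ?_⟩,
      maps_coeff (fun c => ?_) ⟨RatFunc.C q⁻¹ * RatFunc.X, ?_⟩⟩
    · rw [hx, map_mul]; rfl
    · exact (RingEquiv.symm_apply_eq φ).2 (hc c).symm
    · refine (RingEquiv.symm_apply_eq φ).2 ?_
      have : FKx k (RatFunc.C q⁻¹ * RatFunc.X) = Fc k q⁻¹ * Fx k := by rw [map_mul]; rfl
      rw [this, map_mul, hx, hc, ← mul_assoc, ← map_mul, inv_mul_cancel₀ hq, map_one, one_mul]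

/-- An automorphism in `coeffAuts k` acts on `k(x)[y]` coefficientwise, so it preserves `deg_y`. -/
lemma coeffAuts_apply {σ : F2 k ≃+* F2 k} (hσ : σ ∈ coeffAuts k) (p : Polynomial (RatFunc k)) :
    ∃ p' : Polynomial (RatFunc k), σ (FP k p) = FP k p' ∧ p'.degree = p.degree := by
  obtain ⟨hy, h, -⟩ := hσ
  choose ψ hψ using h
  have hinj : Function.Injective (FKx k) := RingHom.injective _
  let Ψ : RatFunc k →+* RatFunc k :=
    { toFun := ψ
      map_one' := hinj (by rw [← hψ]; simp)
      map_zero' := hinj (by rw [← hψ]; simp)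
      map_mul' := fun a b => hinj (by rw [← hψ, map_mul, map_mul, map_mul, hψ, hψ])
      map_add' := fun a b => hinj (by rw [← hψ, map_add, map_add, map_add, hψ, hψ]) }
  refine ⟨p.map Ψ, ?_, Polynomial.degree_map _ _⟩
  have hΨ : ∀ r, σ (FKx k r) = FKx k (Ψ r) := hψ
  induction p using Polynomial.induction_on' with
  | add p q hp hq => simp only [map_add, hp, hq, Polynomial.map_add]
  | monomial n a =>
    simp only [← Polynomial.C_mul_X_pow_eq_monomial, map_mul, map_pow, FP_C, FP_X, hΨ, hy,
      Polynomial.map_mul, Polynomial.map_pow, Polynomial.map_C, Polynomial.map_X]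

/-! ### The derivation -/

lemma Dy_FP {Dy : F2 k → F2 k} (hDy : IsDerivY Dy) (p : Polynomial (RatFunc k)) :
    Dy (FP k p) = FP k (derivative p) := by
  obtain ⟨hadd, hmul, hC, hy⟩ := hDy
  have hpow : ∀ n : ℕ, Dy (Fy k ^ n) = n * Fy k ^ (n - 1) := by
    intro n
    induction n with
    | zero => simpa using hC 1
    | succ n ih =>
      rw [pow_succ, hmul, ih, hy]
      rcases n with _ | n
      · simp
      · simp only [Nat.add_sub_cancel]; push_cast; ring
  induction p using Polynomial.induction_on' with
  | add p q hp hq => simp only [map_add, hadd, hp, hq]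
  | monomial n a =>
    rw [derivative_monomial]
    simp only [← Polynomial.C_mul_X_pow_eq_monomial, map_mul, map_pow, FP_C, FP_X, hmul, hC, hpow,
      map_natCast]
    ring

lemma Dy_div {Dy : F2 k → F2 k} (hDy : IsDerivY Dy) (v w : Polynomial (RatFunc k))
    (hw : w ≠ 0) :
    Dy (FP k v / FP k w) =
      (FP k (derivative v) * FP k w - FP k v * FP k (derivative w)) / FP k w ^ 2 := by
  have hw' := FP_ne_zero hw
  have h := hDy.2.1 (FP k v / FP k w) (FP k w)
  rw [div_mul_cancel₀ _ hw', Dy_FP hDy, Dy_FP hDy] at h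
  rw [h]
  field_simp
  ring

/-! ### Hermite reduction -/

/-- The functions of the form `D_y(h) + Σ a_i / d_i` with `d_i ∈ k[x,y]` irreducible and
`deg_y(a_i) < deg_y(d_i)`, with no condition on the orbits of the `d_i`. -/
def hermiteGroup (Dy : F2 k → F2 k) : AddSubgroup (F2 k) :=
  AddSubgroup.closure (Set.range Dy ∪
    {u | ∃ (a : Polynomial (RatFunc k)) (d : Polynomial (Polynomial k)),
      Irreducible d ∧ a.degree < d.degree ∧ u = FP k a / FPP k d})

lemma hermite_poly {Dy : F2 k → F2 k} (hDy : IsDerivY Dy) (p : Polynomial (RatFunc k)) :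
    FP k p ∈ hermiteGroup Dy := by
  induction p using Polynomial.induction_on' with
  | add p q hp hq => rw [map_add]; exact add_mem hp hq
  | monomial n a =>
    refine AddSubgroup.subset_closure (Or.inl
      ⟨FP k (monomial (n + 1) (a / ((n : RatFunc k) + 1))), ?_⟩)
    have : (n : RatFunc k) + 1 ≠ 0 := by exact_mod_cast Nat.succ_ne_zero n
    rw [Dy_FP hDy, derivative_monomial]
    simp [div_mul_cancel₀ _ this]

/-- Clearing denominators and taking the primitive part, which is irreducible over `k[x]` by Gauss's
lemma. -/
lemma exists_integral_irreducible {d : Polynomial (RatFunc k)} (hd : Irreducible d) :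
    ∃ (c : RatFunc k) (e : Polynomial (Polynomial k)), c ≠ 0 ∧ Irreducible e ∧
      d = Polynomial.C c * PP k e := by
  classical
  let _ : NormalizedGCDMonoid k[X] := Classical.choice inferInstance
  obtain ⟨b, hb, hbd⟩ := IsLocalization.integerNormalization_spec (nonZeroDivisors k[X]) d
  set N := IsLocalization.integerNormalization (nonZeroDivisors k[X]) d
  have hinj : Function.Injective (algebraMap k[X] (RatFunc k)) := IsFractionRing.injective _ _
  have hb0 : algebraMap k[X] (RatFunc k) b ≠ 0 :=
    (map_ne_zero_iff _ hinj).2 (nonZeroDivisors.ne_zero hb)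
  have hbd' : PP k N = Polynomial.C (algebraMap k[X] (RatFunc k) b) * d := by
    rw [← Polynomial.smul_eq_C_mul, algebraMap_smul]; exact hbd
  have hN : N ≠ 0 := by
    intro h
    rw [h, map_zero] at hbd'
    exact mul_ne_zero (by simpa using hb0) hd.ne_zero hbd'.symm
  have hc0 : algebraMap k[X] (RatFunc k) N.content ≠ 0 :=
    (map_ne_zero_iff _ hinj).2 (by simpa [Polynomial.content_eq_zero_iff] using hN)
  have hNP : PP k N = Polynomial.C (algebraMap k[X] (RatFunc k) N.content) * PP k N.primPart := by
    conv_lhs => rw [N.eq_C_content_mul_primPart, map_mul]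
    congr 1
    exact Polynomial.map_C _
  have hdeq : d = Polynomial.C (algebraMap k[X] (RatFunc k) N.content /
      algebraMap k[X] (RatFunc k) b) * PP k N.primPart := by
    have hbC : Polynomial.C (algebraMap k[X] (RatFunc k) b) ≠ 0 := by simpa using hb0
    apply mul_left_cancel₀ hbC
    rw [← hbd', hNP, ← mul_assoc, ← Polynomial.C_mul, mul_div_cancel₀ _ hb0]
  refine ⟨_, N.primPart, div_ne_zero hc0 hb0, ?_, hdeq⟩
  rw [N.isPrimitive_primPart.irreducible_iff_irreducible_map_fraction_map (K := RatFunc k)]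
  have hu : IsUnit (Polynomial.C (algebraMap k[X] (RatFunc k) N.content /
      algebraMap k[X] (RatFunc k) b)) :=
    Polynomial.isUnit_C.2 (div_ne_zero hc0 hb0).isUnit
  rw [hdeq] at hd
  exact (irreducible_isUnit_mul hu).1 hd

lemma hermite_irreducible {Dy : F2 k → F2 k} (hDy : IsDerivY Dy) {d : Polynomial (RatFunc k)}
    (hd : Irreducible d) (a : Polynomial (RatFunc k)) :
    FP k a / FP k d ∈ hermiteGroup Dy := by
  obtain ⟨c, e, hc, he, hd_def⟩ := exists_integral_irreducible hd
  have hd0 := FP_ne_zero hd.ne_zero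
  have key : FP k a / FP k d =
      FP k (a / d) + FP k (Polynomial.C c⁻¹ * (a % d)) / FPP k e := by
    have hC : FP k (Polynomial.C c) ≠ 0 := FP_ne_zero (by simpa using hc)
    have hsplit : FP k a = FP k d * FP k (a / d) + FP k (a % d) := by
      rw [← map_mul, ← map_add, EuclideanDomain.div_add_mod]
    have hde : FP k d = FP k (Polynomial.C c) * FPP k e := by
      rw [hd_def, map_mul]; rfl
    have he0 : FPP k e ≠ 0 := fun h => hd0 (by rw [hde, h, mul_zero])
    have hinv : FP k (Polynomial.C c⁻¹) = (FP k (Polynomial.C c))⁻¹ := by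
      rw [FP_C, FP_C, map_inv₀]
    rw [hsplit, map_mul (FP k) (Polynomial.C c⁻¹), hinv, add_div, mul_div_cancel_left₀ _ hd0, hde]
    field_simp
  rw [key]
  refine add_mem (hermite_poly hDy _) (AddSubgroup.subset_closure (Or.inr ⟨_, e, he, ?_, rfl⟩))
  rw [Polynomial.degree_C_mul (inv_ne_zero hc), ← degree_PP,
    ← Polynomial.degree_C_mul (p := PP k e) hc, ← hd_def]
  exact EuclideanDomain.mod_lt a hd.ne_zero

/-- Since `d` is separable, `a = u d + n v d'` for some `u` and `v`, whence
`a / d^(n+1) = (u + v') / d^n - D_y(v / d^n)`. This lowers the pole order by one as long as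
`n ≥ 1`. -/
lemma hermite_prime_pow {Dy : F2 k → F2 k} (hDy : IsDerivY Dy) {d : Polynomial (RatFunc k)}
    (hd : Irreducible d) (n : ℕ) :
    ∀ a : Polynomial (RatFunc k), FP k a / FP k (d ^ n) ∈ hermiteGroup Dy := by
  induction n with
  | zero => intro a; simpa using hermite_poly hDy a
  | succ n ih =>
    intro a
    rcases Nat.eq_zero_or_pos n with rfl | hn
    · simpa using hermite_irreducible hDy hd a
    · obtain ⟨α, β, hαβ⟩ : IsCoprime d (derivative d) := hd.separable
      have hn0 : (n : RatFunc k) ≠ 0 := by exact_mod_cast hn.ne'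
      have hd0 := FP_ne_zero hd.ne_zero
      -- the scalar `1 / n` is absorbed into `v`
      set v := Polynomial.C (n : RatFunc k)⁻¹ * (a * β) with hv
      have hnv : (n : Polynomial (RatFunc k)) * v = a * β := by
        rw [hv, ← mul_assoc, ← Polynomial.C_eq_natCast, ← Polynomial.C_mul, mul_inv_cancel₀ hn0]
        simp
      have ha : a = a * α * d + n * v * derivative d := by
        rw [hnv]; linear_combination (-a) * hαβ
      have hder := Dy_div hDy v (d ^ n) (pow_ne_zero _ hd.ne_zero)
      have key : FP k a / FP k (d ^ (n + 1)) =
          FP k (a * α + derivative v) / FP k (d ^ n) - Dy (FP k v / FP k (d ^ n)) := by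
        rw [hder, derivative_pow]
        obtain ⟨m, rfl⟩ : ∃ m, n = m + 1 := ⟨n - 1, by omega⟩
        conv_lhs => rw [ha]
        simp only [map_mul, map_add, map_pow, Nat.add_sub_cancel, map_natCast]
        field_simp
        ring
      rw [key]
      exact sub_mem (ih _) (AddSubgroup.subset_closure (Or.inl ⟨_, rfl⟩))

/-- Partial fractions reduce the claim to denominators that are prime powers. -/
lemma hermite_mem {Dy : F2 k → F2 k} (hDy : IsDerivY Dy) (f : F2 k) : f ∈ hermiteGroup Dy := by
  have main : ∀ b : Polynomial (RatFunc k), ∀ a, FP k a / FP k b ∈ hermiteGroup Dy := by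
    intro b
    induction b using UniqueFactorizationMonoid.induction_on_coprime with
    | h0 => intro a; simp [zero_mem]
    | h1 hb =>
      rename_i u
      intro a
      obtain ⟨w, hw⟩ := hb.exists_right_inv
      have h : FP k u * FP k w = 1 := by rw [← map_mul, hw, map_one]
      have hu := FP_ne_zero hb.ne_zero
      have : FP k a / FP k u = FP k (a * w) := by
        rw [map_mul, div_eq_iff hu]; linear_combination (-FP k a) * h
      rw [this]
      exact hermite_poly hDy _
    | hpr i hp => exact hermite_prime_pow hDy hp.irreducible i
    | hcp hxy hx hy =>
      rename_i x y
      intro a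
      rcases eq_or_ne x 0 with rfl | hx0
      · simp [zero_mem]
      rcases eq_or_ne y 0 with rfl | hy0
      · simp [zero_mem]
      obtain ⟨α, β, h⟩ := hxy.isCoprime
      have h' : FP k α * FP k x + FP k β * FP k y = 1 := by
        rw [← map_mul, ← map_mul, ← map_add, h, map_one]
      have hx0' := FP_ne_zero hx0
      have hy0' := FP_ne_zero hy0
      have : FP k a / FP k (x * y) = FP k (a * β) / FP k x + FP k (a * α) / FP k y := by
        simp only [map_mul]
        field_simp
        linear_combination (-FP k a) * h'
      rw [this]
      exact add_mem (hx _) (hy _)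
  rw [← RatFunc.num_div_denom f]
  exact main _ _

/-! ### Merging terms in the same orbit -/

/-- `f` has a `(φ, Dy)`-reduced form. -/
def HasReducedForm (φ : F2 k ≃+* F2 k) (Dy : F2 k → F2 k) (f : F2 k) : Prop :=
  ∃ (g h : F2 k) (m : ℕ) (a : Fin m → Polynomial (RatFunc k))
      (dd : Fin m → Polynomial (Polynomial k)),
      (∀ i, Irreducible (dd i)) ∧
      (∀ i, (a i).degree < (dd i).degree) ∧
      (∀ i i' : Fin m, ∀ t : ℤ, FPP k (dd i) = (φ ^ t) (FPP k (dd i')) → i = i') ∧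
      f = (φ g - g) + Dy h + ∑ i, FP k (a i) / FPP k (dd i)

/-- Every `u` is congruent to each of its `φ`-shifts modulo the image of `φ - 1` (telescoping). -/
lemma zpow_sub_self (φ : F2 k ≃+* F2 k) (t : ℤ) (u : F2 k) :
    ∃ g, (φ ^ t) u - u = φ g - g := by
  induction t with
  | zero => exact ⟨0, by simp⟩
  | succ n ih =>
    obtain ⟨g, hg⟩ := ih
    refine ⟨g + (φ ^ (n : ℤ)) u, ?_⟩
    rw [add_comm, zpow_add, zpow_one, RingAut.mul_apply, map_add]
    linear_combination hg
  | pred n ih =>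
    obtain ⟨g, hg⟩ := ih
    refine ⟨g - (φ ^ (-(n : ℤ) - 1)) u, ?_⟩
    have h : (φ ^ (-(n : ℤ))) u = φ ((φ ^ (-(n : ℤ) - 1)) u) := by
      rw [← RingAut.mul_apply, ← zpow_one_add]; congr 2; ring
    rw [map_sub, ← h]
    linear_combination hg

/-- If `e` lies in the orbit of some `d_j`, a power of `φ` moves `b / e` to a fraction with
denominator `d_j`, which is merged with the `j`-th term; otherwise `b / e` is a new term. -/
lemma reduced_add_term {φ : F2 k ≃+* F2 k} (hφ : φ ∈ coeffAuts k) {Dy : F2 k → F2 k} {f : F2 k}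
    (hf : HasReducedForm φ Dy f) {b : Polynomial (RatFunc k)} {e : Polynomial (Polynomial k)}
    (he : Irreducible e) (hb : b.degree < e.degree) :
    HasReducedForm φ Dy (f + FP k b / FPP k e) := by
  obtain ⟨g, h, m, a, dd, hirr, hdeg, horb, rfl⟩ := hf
  by_cases hex : ∃ j, ∃ t : ℤ, (φ ^ t) (FPP k e) = FPP k (dd j)
  · obtain ⟨j, t, ht⟩ := hex
    have hmem : φ ^ t ∈ coeffAuts k := zpow_mem hφ t
    obtain ⟨b', hb', hbdeg⟩ := coeffAuts_apply hmem b
    obtain ⟨e', he', hedeg⟩ := coeffAuts_apply hmem (PP k e)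
    have hee : e' = PP k (dd j) := FP_injective (by rw [← he']; exact ht)
    have hlt : b'.degree < (dd j).degree := by
      rw [hbdeg, ← degree_PP (dd j), ← hee, hedeg, degree_PP]; exact hb
    obtain ⟨g', hg'⟩ := zpow_sub_self φ t (FP k b / FPP k e)
    rw [map_div₀, hb', ht] at hg'
    refine ⟨g - g', h, m, Function.update a j (a j + b'), dd, hirr, fun i => ?_, horb, ?_⟩
    · rcases eq_or_ne i j with rfl | hij
      · rw [Function.update_self]
        exact (Polynomial.degree_add_le _ _).trans_lt (max_lt (hdeg i) hlt)
      · rw [Function.update_of_ne hij]; exact hdeg i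
    · have hsum : ∑ i, FP k (Function.update a j (a j + b') i) / FPP k (dd i) =
          ∑ i, FP k (a i) / FPP k (dd i) + FP k b' / FPP k (dd j) := by
        rw [← Finset.add_sum_erase _ _ (Finset.mem_univ j),
          ← Finset.add_sum_erase _ (fun i => FP k (a i) / FPP k (dd i)) (Finset.mem_univ j),
          Function.update_self, map_add, add_div]
        have : ∑ i ∈ Finset.univ.erase j, FP k (Function.update a j (a j + b') i) / FPP k (dd i) =
            ∑ i ∈ Finset.univ.erase j, FP k (a i) / FPP k (dd i) :=
          Finset.sum_congr rfl fun i hi => by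
            rw [Function.update_of_ne (Finset.ne_of_mem_erase hi)]
        rw [this]; ring
      rw [hsum, map_sub]
      linear_combination -hg'
  · push Not at hex
    refine ⟨g, h, m + 1, Fin.cons b a, Fin.cons e dd, ?_, ?_, ?_, ?_⟩
    · exact Fin.cases he hirr
    · exact Fin.cases hb hdeg
    · intro i i' t hii
      induction i using Fin.cases with
      | zero =>
        induction i' using Fin.cases with
        | zero => rfl
        | succ j =>
          refine absurd ?_ (hex j (-t))
          simp only [Fin.cons_zero, Fin.cons_succ] at hii
          rw [hii, ← RingAut.mul_apply, ← zpow_add, neg_add_cancel, zpow_zero, RingAut.one_apply]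
      | succ j =>
        induction i' using Fin.cases with
        | zero => exact absurd hii.symm (hex j t)
        | succ j' => exact congrArg _ (horb j j' t hii)
    · rw [Fin.sum_univ_succ]
      simp only [Fin.cons_zero, Fin.cons_succ]
      ring

lemma reduced_add_deriv {φ : F2 k ≃+* F2 k} {Dy : F2 k → F2 k} (hDy : IsDerivY Dy) {f : F2 k}
    (hf : HasReducedForm φ Dy f) (w : F2 k) : HasReducedForm φ Dy (f + Dy w) := by
  obtain ⟨g, h, m, a, dd, hirr, hdeg, horb, rfl⟩ := hf
  refine ⟨g, h + w, m, a, dd, hirr, hdeg, horb, ?_⟩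
  rw [hDy.1]; ring

lemma Dy_neg {Dy : F2 k → F2 k} (hDy : IsDerivY Dy) (w : F2 k) : Dy (-w) = -Dy w := by
  have h0 : Dy 0 = 0 := by simpa using hDy.1 0 0
  have h := hDy.1 w (-w)
  rw [add_neg_cancel, h0] at h
  linear_combination -h

lemma reduced_of_mem {φ : F2 k ≃+* F2 k} (hφ : φ ∈ coeffAuts k) {Dy : F2 k → F2 k}
    (hDy : IsDerivY Dy) {f : F2 k} (hf : f ∈ hermiteGroup Dy) : HasReducedForm φ Dy f := by
  refine AddSubgroup.closure_induction_right (p := fun f _ => HasReducedForm φ Dy f)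
    ?_ ?_ ?_ hf
  · have h0 : Dy 0 = 0 := by simpa using hDy.1 0 0
    exact ⟨0, 0, 0, Fin.elim0, Fin.elim0, fun i => i.elim0, fun i => i.elim0, fun i => i.elim0,
      by simp [h0]⟩
  · rintro u - v (⟨w, rfl⟩ | ⟨b, e, he, hb, rfl⟩) hu
    · exact reduced_add_deriv hDy hu w
    · exact reduced_add_term hφ hu he hb
  · rintro u - v (⟨w, rfl⟩ | ⟨b, e, he, hb, rfl⟩) hu
    · rw [← Dy_neg hDy]; exact reduced_add_deriv hDy hu (-w)
    · rw [← neg_div, ← map_neg]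
      exact reduced_add_term hφ hu he (by rwa [Polynomial.degree_neg])

end ReducedForm

/-- for `φ ∈ {σ_x, τ_{x,q}}` (with `q` not a root of unity in the `q`-case),
every `f ∈ k(x,y)` admits a `(φ, D_y)`-reduced form
`f = φ(g) - g + D_y(h) + Σᵢ aᵢ/dᵢ` with `aᵢ ∈ k(x)[y]`, `dᵢ ∈ k[x,y]` irreducible in
pairwise distinct `φ`-orbits, and `deg_y(aᵢ) < deg_y(dᵢ)`. -/
theorem stmt4 {k : Type*} [Field k] [CharZero k]
    (φ : F2 k ≃+* F2 k)
    (hφ : IsShiftX φ ∨ ∃ q : k, q ≠ 0 ∧ NotRootOfUnity q ∧ IsQShiftX q φ)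
    (Dy : F2 k → F2 k) (hDy : IsDerivY Dy)
    (f : F2 k) :
    ∃ (g h : F2 k) (m : ℕ) (a : Fin m → Polynomial (RatFunc k))
      (dd : Fin m → Polynomial (Polynomial k)),
      (∀ i, Irreducible (dd i)) ∧
      (∀ i, (a i).degree < (dd i).degree) ∧
      (∀ i i' : Fin m, ∀ t : ℤ, FPP k (dd i) = (φ ^ t) (FPP k (dd i')) → i = i') ∧
      f = (φ g - g) + Dy h + ∑ i, FP k (a i) / FPP k (dd i) := by
  exact reduced_of_mem (mem_coeffAuts hφ) hDy (hermite_mem hDy f)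
end
end

section
/- Let q ∈ k \ {0} be not a root of unity. Every rational function f ∈ k(x,y) admits a (τ_{x,q}, σ_y)-reduced form: there exist g, h ∈ k(x,y), finitely many a_{i,j} ∈ k(x)[y] and irreducible d_i ∈ k[x,y] with deg_y(a_{i,j}) < deg_y(d_i), the d_i lying in pairwise distinct (τ_{x,q}, σ_y)-orbits, such that f = Δ_{x,q}(g) + Δ_y(h) + Σ_{i=1}^n Σ_{j=1}^{m_i} a_{i,j}/d_i^j. -/
/-!
The proof combines partial fractions with the fact that shifting does not change a class modulo
`N = Δ_{x,q}(k(x,y)) + Δ_y(k(x,y))`.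

* Every `f ∈ k(x,y) = k(x)(y)` is a sum of polynomials in `k(x)[y]` and of simple fractions
  `a / d^(j+1)` with `d ∈ k[x,y]` irreducible and `deg_y a < deg_y d`
  (`partialFraction_induction`). Gauss's lemma replaces irreducible polynomials of `k(x)[y]` by
  irreducible polynomials of `k[x,y]`.
* Polynomials are differences `σ_y h - h` (`exists_shift_sub_eq_FP`): in characteristic zero the
  Bernoulli polynomials provide antidifferences of the powers of `y`.
* For `θ = τ^s σ_y^t` one has `θ u - u ∈ N`, and `θ` maps `k(x)[y]` to itself without raising
  degrees in `y` (`DegBounded`). Hence a simple fraction with denominator `θ(d)^(j+1)` is congruent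
  modulo `N` to one with denominator `d^(j+1)`. Fixing one representative in each
  `(τ, σ_y)`-orbit of irreducible polynomials, every simple fraction is congruent to one whose
  denominator is a power of a representative, and sums of these are reduced.
-/

open Polynomial

noncomputable section

variable (k : Type*) [Field k] [CharZero k]

variable {k}

/-! ### Partial fractions over `k[x,y]` -/

/-- Clearing denominators and content: up to a nonzero factor in `k(x)`, an irreducible polynomial
of `k(x)[y]` is an irreducible polynomial of `k[x,y]`. -/
theorem exists_irreducible_PP_eq {k : Type*} [Field k] (p : Polynomial (RatFunc k))
    (hp : Irreducible p) :
    ∃ (d : Polynomial (Polynomial k)) (c : RatFunc k), Irreducible d ∧ c ≠ 0 ∧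
      PP k d = C c * p := by
  classical
  obtain ⟨inst⟩ : Nonempty (NormalizedGCDMonoid (Polynomial k)) := inferInstance
  set N := IsLocalization.integerNormalization (nonZeroDivisors (Polynomial k)) p with hN
  obtain ⟨b, hb, hb'⟩ :=
    IsLocalization.integerNormalization_spec (nonZeroDivisors (Polynomial k)) p
  have hb0 : algebraMap (Polynomial k) (RatFunc k) b ≠ 0 := by
    simpa using nonZeroDivisors.ne_zero hb
  have hmap : PP k N = C (algebraMap (Polynomial k) (RatFunc k) b) * p := by
    rw [← Polynomial.smul_eq_C_mul, IsScalarTower.algebraMap_smul]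
    exact hb'
  have hN0 : N ≠ 0 := by
    intro h
    rw [h, map_zero] at hmap
    exact mul_ne_zero (C_ne_zero.mpr hb0) hp.ne_zero hmap.symm
  have hcont : algebraMap (Polynomial k) (RatFunc k) N.content ≠ 0 := by
    simpa [content_eq_zero_iff] using hN0
  have hfac : PP k N =
      C (algebraMap (Polynomial k) (RatFunc k) N.content) * PP k N.primPart := by
    conv_lhs => rw [N.eq_C_content_mul_primPart]
    simp [PP]
  have hprim : PP k N.primPart = C ((algebraMap (Polynomial k) (RatFunc k) N.content)⁻¹ *
      algebraMap (Polynomial k) (RatFunc k) b) * p := by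
    rw [C_mul, mul_assoc, ← hmap, hfac, ← mul_assoc, ← C_mul, inv_mul_cancel₀ hcont, C_1, one_mul]
  refine ⟨N.primPart, _, ?_, mul_ne_zero (inv_ne_zero hcont) hb0, hprim⟩
  rw [N.isPrimitive_primPart.irreducible_iff_irreducible_map_fraction_map (K := RatFunc k)]
  change Irreducible (PP k N.primPart)
  rw [hprim, irreducible_isUnit_mul
    (isUnit_C.mpr (mul_ne_zero (inv_ne_zero hcont) hb0).isUnit)]
  exact hp

/-- Induction principle expressing the partial fraction decomposition in `k(x)(y)`. -/
theorem partialFraction_induction {k : Type*} [Field k] {P : F2 k → Prop}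
    (hadd : ∀ u v, P u → P v → P (u + v)) (hpoly : ∀ p, P (FP k p))
    (hfrac : ∀ (d : Polynomial (Polynomial k)) (a : Polynomial (RatFunc k)) (j : ℕ),
      Irreducible d → a.degree < d.degree → P (FP k a / FPP k d ^ (j + 1)))
    (f : F2 k) : P f := by
  have hinj : Function.Injective (FP k) := RatFunc.algebraMap_injective _
  have key : ∀ D a : Polynomial (RatFunc k), D ≠ 0 → P (FP k a / FP k D) := by
    intro D
    induction D using UniqueFactorizationMonoid.induction_on_coprime with
    | h0 => intro a h; exact absurd rfl h
    | h1 hx =>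
      intro a _
      obtain ⟨u, rfl⟩ := hx
      have : FP k a / FP k u = FP k (a * ((u⁻¹ : (Polynomial (RatFunc k))ˣ) : _)) := by
        rw [div_eq_iff (by simpa using hinj.ne u.ne_zero), ← map_mul, mul_assoc, Units.inv_mul,
          mul_one]
      rw [this]; exact hpoly _
    | @hpr p i hp =>
      have hp0 : FP k p ≠ 0 := by simpa using hinj.ne hp.ne_zero
      induction i with
      | zero => intro a _; simpa using hpoly a
      | succ i ih =>
        intro a _
        obtain ⟨d, c, hd, hc, hdc⟩ := exists_irreducible_PP_eq p hp.irreducible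
        have hsplit : FP k a / FP k (p ^ (i + 1)) = FP k (a / p) / FP k (p ^ i) +
            FP k (C (c ^ (i + 1)) * (a % p)) / FPP k d ^ (i + 1) := by
          have hc0 : FP k (C c) ≠ 0 := by
            simpa using hinj.ne (C_ne_zero.mpr hc)
          have ha : FP k a = FP k p * FP k (a / p) + FP k (a % p) := by
            rw [← map_mul, ← map_add, EuclideanDomain.div_add_mod]
          have hF : FPP k d = FP k (C c) * FP k p := by
            rw [← map_mul, ← hdc]; rfl
          rw [ha, hF, C_pow, map_mul, map_pow, map_pow, map_pow]
          field_simp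
          ring
        rw [hsplit]
        refine hadd _ _ (ih _ (pow_ne_zero _ hp.ne_zero)) (hfrac d _ i hd ?_)
        have hdeg : d.degree = p.degree := by
          have h1 : (PP k d).degree = d.degree :=
            degree_map_eq_of_injective (RatFunc.algebraMap_injective k) d
          rw [← h1, hdc, degree_C_mul hc]
        rw [hdeg, degree_C_mul (pow_ne_zero _ hc)]
        exact EuclideanDomain.mod_lt a hp.ne_zero
    | @hcp x y hxy hx hy =>
      intro a h
      have hx0 := left_ne_zero_of_mul h
      have hy0 := right_ne_zero_of_mul h
      obtain ⟨u, v, huv⟩ := hxy.isCoprime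
      have h1 : FP k x ≠ 0 := by simpa using hinj.ne hx0
      have h2 : FP k y ≠ 0 := by simpa using hinj.ne hy0
      have hsplit : FP k a / FP k (x * y) = FP k (a * v) / FP k x + FP k (a * u) / FP k y := by
        have : FP k u * FP k x + FP k v * FP k y = 1 := by
          rw [← map_mul, ← map_mul, ← map_add, huv, map_one]
        rw [map_mul, map_mul, map_mul]
        field_simp
        linear_combination -FP k a * this
      rw [hsplit]
      exact hadd _ _ (hx _ hx0) (hy _ hy0)
  have := key f.denom f.num f.denom_ne_zero
  rwa [show FP k f.num / FP k f.denom = f from f.num_div_denom] at this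

/-! ### Polynomials are differences in `y` -/

theorem shiftY_FP {k : Type*} [Field k] {σy : F2 k ≃+* F2 k} (hσy : IsShiftY σy)
    (p : Polynomial (RatFunc k)) : σy (FP k p) = FP k (p.comp (1 + X)) := by
  have hC : (σy : F2 k →+* F2 k).comp RatFunc.C = RatFunc.C := by
    apply IsFractionRing.ringHom_ext (A := Polynomial k)
    intro r
    have : ((σy : F2 k →+* F2 k).comp RatFunc.C).comp (algebraMap (Polynomial k) (RatFunc k)) =
        RatFunc.C.comp (algebraMap (Polynomial k) (RatFunc k)) := by
      apply Polynomial.ringHom_ext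
      · intro c
        simpa [Fc] using hσy.1 c
      · simpa [Fx] using hσy.2.1
    exact congrArg (fun φ => φ r) this
  have : (σy : F2 k →+* F2 k).comp (FP k) = (FP k).comp (compRingHom (1 + X)) := by
    apply Polynomial.ringHom_ext
    · intro c
      simpa [FP] using congrArg (fun φ => φ c) hC
    · simpa [Fy, FP, add_comm] using hσy.2.2
  exact congrArg (fun φ => φ p) this

theorem exists_shift_sub_eq_FP {k : Type*} [Field k] [CharZero k] {σy : F2 k ≃+* F2 k}
    (hσy : IsShiftY σy) (p : Polynomial (RatFunc k)) :
    ∃ h, σy h - h = FP k p := by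
  induction p using Polynomial.induction_on' with
  | add p q hp hq =>
    obtain ⟨u, hu⟩ := hp
    obtain ⟨v, hv⟩ := hq
    exact ⟨u + v, by rw [map_add, map_add, ← hu, ← hv]; ring⟩
  | monomial n c =>
    -- the Bernoulli polynomial `B` of degree `n + 1` satisfies `B(y+1) - B(y) = (n+1) y^n`
    have : CharZero (RatFunc k) := charZero_of_injective_algebraMap
      (algebraMap k (RatFunc k)).injective
    have hB := congrArg (Polynomial.map (algebraMap ℚ (RatFunc k)))
      (Polynomial.bernoulli_comp_one_add_X (n + 1))
    simp only [Polynomial.map_comp, Polynomial.map_add, Polynomial.map_one, map_X,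
      add_tsub_cancel_right, nsmul_eq_mul, Polynomial.map_mul, Polynomial.map_natCast,
      Polynomial.map_pow] at hB
    set B := (Polynomial.bernoulli (n + 1)).map (algebraMap ℚ (RatFunc k))
    have hn : ((n + 1 : ℕ) : RatFunc k) ≠ 0 := by exact_mod_cast n.succ_ne_zero
    refine ⟨FP k (C (c / (n + 1 : ℕ)) * B), ?_⟩
    rw [shiftY_FP hσy, ← map_sub, mul_comp, C_comp, hB, ← C_mul_X_pow_eq_monomial]
    congr 1
    rw [← C_eq_natCast, mul_add, add_sub_cancel_left, ← mul_assoc, ← C_mul, div_mul_cancel₀ _ hn]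

/-! ### Automorphisms that do not raise the degree in `y` -/

/-- `θ` maps `k(x)[y]` into itself without raising the degree in `y`. -/
def DegBounded {k : Type*} [Field k] (θ : F2 k ≃+* F2 k) : Prop :=
  ∀ a, ∃ b, θ (FP k a) = FP k b ∧ b.degree ≤ a.degree

theorem DegBounded.mul {k : Type*} [Field k] {θ ψ : F2 k ≃+* F2 k}
    (hθ : DegBounded θ) (hψ : DegBounded ψ) : DegBounded (θ * ψ) := by
  intro a
  obtain ⟨b, hb, hba⟩ := hψ a
  obtain ⟨c, hc, hcb⟩ := hθ b
  exact ⟨c, by rw [RingAut.mul_apply, hb, hc], hcb.trans hba⟩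

theorem DegBounded.zpow {k : Type*} [Field k] {θ : F2 k ≃+* F2 k}
    (hθ : DegBounded θ) (hinv : DegBounded θ⁻¹) (s : ℤ) : DegBounded (θ ^ s) := by
  induction s using Int.induction_on with
  | zero => intro a; exact ⟨a, rfl, le_rfl⟩
  | succ i ih => rw [zpow_add_one]; exact ih.mul hθ
  | pred i ih => rw [zpow_sub_one]; exact ih.mul hinv

/-- An automorphism fixing `k` with `x ↦ e x`, `e ∈ k`, and `y ↦ y + c`, `c ∈ k(x)`, preserves `k(x)`,
hence acts on `k(x)[y]` by a coefficient map followed by a translation of `y`. -/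
theorem degBounded_of {k : Type*} [Field k] {θ : F2 k ≃+* F2 k} (e : k) (c : RatFunc k)
    (hc : ∀ c : k, θ (Fc k c) = Fc k c) (hx : θ (Fx k) = Fc k e * Fx k)
    (hy : θ (Fy k) = Fy k + FKx k c) : DegBounded θ := by
  have hpol : ∀ p : Polynomial k, ∃ r, θ (FKx k (algebraMap _ _ p)) = FKx k r := by
    intro p
    induction p using Polynomial.induction_on' with
    | add p q hp hq =>
      obtain ⟨u, hu⟩ := hp
      obtain ⟨v, hv⟩ := hq
      exact ⟨u + v, by simp only [map_add, hu, hv]⟩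
    | monomial n b =>
      refine ⟨RatFunc.C b * (RatFunc.C e * RatFunc.X) ^ n, ?_⟩
      have h1 := hc b
      simp only [Fc, Fx, FKx, RingHom.comp_apply] at h1 hx ⊢
      rw [← C_mul_X_pow_eq_monomial]
      simp only [map_mul, map_pow, RatFunc.algebraMap_C, RatFunc.algebraMap_X, h1, hx]
  have hrat : ∀ r : RatFunc k, ∃ r', θ (FKx k r) = FKx k r' := by
    intro r
    obtain ⟨u, hu⟩ := hpol r.num
    obtain ⟨v, hv⟩ := hpol r.denom
    exact ⟨u / v, by rw [← r.num_div_denom, map_div₀, map_div₀, map_div₀, hu, hv]⟩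
  choose φ hφ using hrat
  intro a
  refine ⟨∑ i ∈ a.support, C (φ (a.coeff i)) * (X + C c) ^ i, ?_, ?_⟩
  · have hC : ∀ r, FP k (C r) = FKx k r := fun r => RatFunc.algebraMap_C r
    have hX : FP k X = Fy k := RatFunc.algebraMap_X
    conv_lhs => rw [a.as_sum_support_C_mul_X_pow]
    simp only [map_sum, map_mul, map_pow, map_add, hC, hX, hφ, hy]
  · refine (degree_sum_le _ _).trans (Finset.sup_le fun i hi => ?_)
    have hpow : ((X + C c) ^ i).degree = (i : WithBot ℕ) := by
      rw [degree_pow, degree_X_add_C, nsmul_one]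
    rw [← smul_eq_C_mul]
    exact (degree_smul_le _ _).trans (hpow.trans_le (le_degree_of_mem_supp i hi))

theorem IsQShiftX.degBounded {k : Type*} [Field k] {q : k} {τ : F2 k ≃+* F2 k}
    (hτ : IsQShiftX q τ) : DegBounded τ :=
  degBounded_of q 0 hτ.1 hτ.2.2 (by rw [hτ.2.1, map_zero, add_zero])

theorem IsQShiftX.degBounded_inv {k : Type*} [Field k] {q : k} (hq : q ≠ 0) {τ : F2 k ≃+* F2 k}
    (hτ : IsQShiftX q τ) : DegBounded τ⁻¹ := by
  refine degBounded_of q⁻¹ 0 (fun c => ?_) ?_ ?_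
  · exact τ.symm_apply_eq.mpr (hτ.1 c).symm
  · refine τ.symm_apply_eq.mpr ?_
    rw [map_mul, hτ.1, hτ.2.2, ← mul_assoc, ← map_mul, inv_mul_cancel₀ hq, map_one, one_mul]
  · refine τ.symm_apply_eq.mpr ?_
    rw [map_zero, add_zero, hτ.2.1]

theorem IsShiftY.degBounded {k : Type*} [Field k] {σy : F2 k ≃+* F2 k}
    (hσy : IsShiftY σy) : DegBounded σy :=
  degBounded_of 1 1 hσy.1 (by rw [hσy.2.1, map_one, one_mul]) (by rw [hσy.2.2, map_one])

theorem IsShiftY.degBounded_inv {k : Type*} [Field k] {σy : F2 k ≃+* F2 k}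
    (hσy : IsShiftY σy) : DegBounded σy⁻¹ := by
  refine degBounded_of 1 (-1) (fun c => ?_) ?_ ?_
  · exact σy.symm_apply_eq.mpr (hσy.1 c).symm
  · refine σy.symm_apply_eq.mpr ?_
    rw [map_one, one_mul, hσy.2.1]
  · refine σy.symm_apply_eq.mpr ?_
    rw [map_add, hσy.2.2, map_neg, map_neg, map_one, map_one]
    ring

theorem commute_shifts {k : Type*} [Field k] {q : k} {τ σy : F2 k ≃+* F2 k}
    (hτ : IsQShiftX q τ) (hσy : IsShiftY σy) : Commute τ σy := by
  have hC : ((τ * σy : F2 k ≃+* F2 k) : F2 k →+* F2 k).comp RatFunc.C =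
      ((σy * τ : F2 k ≃+* F2 k) : F2 k →+* F2 k).comp RatFunc.C := by
    apply IsFractionRing.ringHom_ext (A := Polynomial k)
    intro r
    have : (((τ * σy : F2 k ≃+* F2 k) : F2 k →+* F2 k).comp RatFunc.C).comp
          (algebraMap (Polynomial k) (RatFunc k)) =
        (((σy * τ : F2 k ≃+* F2 k) : F2 k →+* F2 k).comp RatFunc.C).comp
          (algebraMap (Polynomial k) (RatFunc k)) := by
      apply Polynomial.ringHom_ext
      · intro c
        have h : τ (σy (Fc k c)) = σy (τ (Fc k c)) := by rw [hσy.1, hτ.1, hσy.1]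
        simpa [Fc] using h
      · have h : τ (σy (Fx k)) = σy (τ (Fx k)) := by
          rw [hσy.2.1, hτ.2.2, map_mul, hσy.1, hσy.2.1]
        simpa [Fx] using h
    exact congrArg (fun φ => φ r) this
  have hF : ((τ * σy : F2 k ≃+* F2 k) : F2 k →+* F2 k) =
      ((σy * τ : F2 k ≃+* F2 k) : F2 k →+* F2 k) := by
    apply IsFractionRing.ringHom_ext (A := Polynomial (RatFunc k))
    intro r
    have : ((τ * σy : F2 k ≃+* F2 k) : F2 k →+* F2 k).comp (FP k) =
        ((σy * τ : F2 k ≃+* F2 k) : F2 k →+* F2 k).comp (FP k) := by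
      apply Polynomial.ringHom_ext
      · intro c
        simpa [FP] using congrArg (fun φ => φ c) hC
      · have h : τ (σy (Fy k)) = σy (τ (Fy k)) := by
          rw [hσy.2.2, hτ.2.1, map_add, map_one, hτ.2.1, hσy.2.2]
        simpa [Fy, FP] using h
    exact congrArg (fun φ => φ r) this
  exact RingEquiv.ext fun x => congrArg (fun φ => φ x) hF

/-! ### Reduction modulo differences -/

/-- `f` is a sum `(τ g - g) + (σy h - h)`. -/
def IsDiff {k : Type*} [Field k] (τ σy : F2 k ≃+* F2 k) (f : F2 k) : Prop :=
  ∃ g h, f = (τ g - g) + (σy h - h)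

theorem IsDiff.add {k : Type*} [Field k] {τ σy : F2 k ≃+* F2 k} {u v : F2 k}
    (hu : IsDiff τ σy u) (hv : IsDiff τ σy v) : IsDiff τ σy (u + v) := by
  obtain ⟨g, h, rfl⟩ := hu
  obtain ⟨g', h', rfl⟩ := hv
  exact ⟨g + g', h + h', by rw [map_add, map_add]; ring⟩

theorem exists_zpow_sub_eq {k : Type*} [Field k] (θ : F2 k ≃+* F2 k) (s : ℤ) (u : F2 k) :
    ∃ g, (θ ^ s) u - u = θ g - g := by
  induction s using Int.induction_on with
  | zero => exact ⟨0, by simp⟩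
  | succ i ih =>
    obtain ⟨g, hg⟩ := ih
    refine ⟨g + (θ ^ (i : ℤ)) u, ?_⟩
    rw [add_comm (i : ℤ) 1, zpow_one_add, RingAut.mul_apply, map_add]
    linear_combination hg
  | pred i ih =>
    obtain ⟨g, hg⟩ := ih
    refine ⟨g - (θ ^ (-(i : ℤ) - 1)) u, ?_⟩
    have h : θ ((θ ^ (-(i : ℤ) - 1)) u) = (θ ^ (-(i : ℤ))) u := by
      rw [← RingAut.mul_apply, ← zpow_one_add, add_sub_cancel]
    rw [map_sub, h]
    linear_combination hg

theorem isDiff_zpow_sub {k : Type*} [Field k] (τ σy : F2 k ≃+* F2 k) (s t : ℤ) (u : F2 k) :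
    IsDiff τ σy ((τ ^ s) ((σy ^ t) u) - u) := by
  obtain ⟨g, hg⟩ := exists_zpow_sub_eq τ s ((σy ^ t) u)
  obtain ⟨h, hh⟩ := exists_zpow_sub_eq σy t u
  exact ⟨g, h, by rw [← hg, ← hh]; ring⟩

/-- The orbit equivalence relation on irreducible polynomials of `k[x,y]`, for commuting `τ`, `σy`.
The restriction to irreducible polynomials makes the chosen orbit representatives irreducible. -/
def orbitSetoid {k : Type*} [Field k] {τ σy : F2 k ≃+* F2 k} (hcomm : Commute τ σy) :
    Setoid {d : Polynomial (Polynomial k) // Irreducible d} where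
  r d d' := ∃ s t : ℤ, FPP k d = (τ ^ s) ((σy ^ t) (FPP k d'))
  iseqv :=
    { refl := fun d => ⟨0, 0, by simp⟩
      symm := by
        rintro d d' ⟨s, t, h⟩
        refine ⟨-s, -t, ?_⟩
        have h2 : (τ ^ (-s) * σy ^ (-t)) * (τ ^ s * σy ^ t) = 1 := by
          rw [(hcomm.zpow_zpow (-s) (-t)).eq, mul_assoc, ← mul_assoc (τ ^ (-s)), ← zpow_add]
          simp
        rw [h]
        exact (congrArg (fun φ : F2 k ≃+* F2 k => φ (FPP k d')) h2).symm
      trans := by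
        rintro d d' d'' ⟨s, t, h⟩ ⟨s', t', h'⟩
        refine ⟨s + s', t + t', ?_⟩
        have h2 : (τ ^ s * σy ^ t) * (τ ^ s' * σy ^ t') = τ ^ (s + s') * σy ^ (t + t') := by
          rw [zpow_add, zpow_add, mul_assoc, ← mul_assoc (σy ^ t), ← (hcomm.zpow_zpow s' t).eq]
          simp only [mul_assoc]
        rw [h, h']
        exact congrArg (fun φ : F2 k ≃+* F2 k => φ (FPP k d'')) h2 }

/-- A simple fraction can be moved along the orbit of its denominator modulo differences. -/
theorem exists_isDiff_frac_sub {k : Type*} [Field k] {τ σy : F2 k ≃+* F2 k}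
    (hb : ∀ s t : ℤ, DegBounded (τ ^ s * σy ^ t))
    (hb' : ∀ s t : ℤ, DegBounded (τ ^ s * σy ^ t)⁻¹)
    {d r : Polynomial (Polynomial k)} {s t : ℤ} (hdr : FPP k d = (τ ^ s) ((σy ^ t) (FPP k r)))
    {a : Polynomial (RatFunc k)} (ha : a.degree < d.degree) (j : ℕ) :
    ∃ b : Polynomial (RatFunc k), b.degree < r.degree ∧
      IsDiff τ σy (FP k a / FPP k d ^ (j + 1) - FP k b / FPP k r ^ (j + 1)) := by
  have hdeg : ∀ p : Polynomial (Polynomial k), (PP k p).degree = p.degree := fun p =>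
    degree_map_eq_of_injective (RatFunc.algebraMap_injective k) p
  obtain ⟨b, hab, hba⟩ := hb' s t a
  obtain ⟨c, hc, hcr⟩ := hb s t (PP k r)
  have hcd : PP k d = c := RatFunc.algebraMap_injective _ (hdr.trans hc)
  refine ⟨b, ?_, ?_⟩
  · rw [← hcd, hdeg, hdeg] at hcr
    exact hba.trans_lt (ha.trans_le hcr)
  · have hA : FP k a = (τ ^ s) ((σy ^ t) (FP k b)) := by
      rw [← RingAut.mul_apply, ← hab, ← RingAut.mul_apply, mul_inv_cancel]
      rfl
    rw [hA, hdr, ← map_pow, ← map_pow, ← map_div₀, ← map_div₀]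
    exact isDiff_zpow_sub τ σy s t _

/-- Every rational function is, modulo differences, a finite sum of simple fractions `a / d^(j+1)`
with `d` in the range of a fixed system `rep` of orbit representatives; the numerators are the
values of a finitely supported function `A`. -/
theorem exists_finsupp_reduced {k : Type*} [Field k] [CharZero k] {τ σy : F2 k ≃+* F2 k}
    (hσy : IsShiftY σy)
    (hb : ∀ s t : ℤ, DegBounded (τ ^ s * σy ^ t))
    (hb' : ∀ s t : ℤ, DegBounded (τ ^ s * σy ^ t)⁻¹)
    {Q : Type*} (rep : Q → Polynomial (Polynomial k)) (hirr : ∀ c, Irreducible (rep c))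
    (hrep : ∀ d, Irreducible d → ∃ c, ∃ s t : ℤ, FPP k d = (τ ^ s) ((σy ^ t) (FPP k (rep c))))
    (f : F2 k) :
    ∃ A : (Q × ℕ) →₀ Polynomial (RatFunc k), (∀ c j, (A (c, j)).degree < (rep c).degree) ∧
      IsDiff τ σy (f - A.sum fun p a => FP k a / FPP k (rep p.1) ^ (p.2 + 1)) := by
  classical
  have hbot : ∀ c, (0 : Polynomial (RatFunc k)).degree < (rep c).degree := fun c => by
    rw [degree_zero, bot_lt_iff_ne_bot, Ne, degree_eq_bot]
    exact (hirr c).ne_zero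
  induction f using partialFraction_induction with
  | hadd u v hu hv =>
    obtain ⟨A, hA, hA'⟩ := hu
    obtain ⟨B, hB, hB'⟩ := hv
    refine ⟨A + B, fun c j => (degree_add_le _ _).trans_lt (max_lt (hA c j) (hB c j)), ?_⟩
    rw [Finsupp.sum_add_index' (by simp) (by intro p a b; rw [map_add, add_div]),
      add_sub_add_comm]
    exact hA'.add hB'
  | hpoly p =>
    obtain ⟨h, hh⟩ := exists_shift_sub_eq_FP hσy p
    exact ⟨0, fun c j => hbot c, 0, h, by simp [hh]⟩
  | hfrac d a j hd ha =>
    obtain ⟨c, s, t, hdr⟩ := hrep d hd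
    obtain ⟨b, hbr, hdiff⟩ := exists_isDiff_frac_sub hb hb' hdr ha j
    refine ⟨Finsupp.single (c, j) b, fun c' j' => ?_, ?_⟩
    · rw [Finsupp.single_apply]
      split_ifs with h
      · obtain ⟨rfl, rfl⟩ := Prod.mk.inj h
        exact hbr
      · exact hbot c'
    · rwa [Finsupp.sum_single_index (by simp)]

/-- for `q ∈ k \ {0}` not a root of unity, every `f ∈ k(x,y)` admits a
`(τ_{x,q}, σ_y)`-reduced form
`f = Δ_{x,q}(g) + Δ_y(h) + Σᵢ Σⱼ a_{i,j}/dᵢ^j` with `a_{i,j} ∈ k(x)[y]`, `dᵢ ∈ k[x,y]`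
irreducible in pairwise distinct `(τ_{x,q}, σ_y)`-orbits, and `deg_y(a_{i,j}) < deg_y(dᵢ)`. -/
theorem stmt5 {k : Type*} [Field k] [CharZero k]
    (q : k) (hq : q ≠ 0) (hqru : NotRootOfUnity q)
    (τ : F2 k ≃+* F2 k) (hτ : IsQShiftX q τ)
    (σy : F2 k ≃+* F2 k) (hσy : IsShiftY σy)
    (f : F2 k) :
    ∃ (g h : F2 k) (n : ℕ) (m : Fin n → ℕ)
      (a : Fin n → ℕ → Polynomial (RatFunc k))
      (dd : Fin n → Polynomial (Polynomial k)),
      (∀ i, Irreducible (dd i)) ∧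
      (∀ i j, j < m i → (a i j).degree < (dd i).degree) ∧
      (∀ i i' : Fin n, ∀ s t : ℤ,
        FPP k (dd i) = (τ ^ s) ((σy ^ t) (FPP k (dd i'))) → i = i') ∧
      f = (τ g - g) + (σy h - h) +
        ∑ i, ∑ j ∈ Finset.range (m i), FP k (a i j) / FPP k (dd i) ^ (j + 1) := by
  have hcomm := commute_shifts hτ hσy
  have hbτ := DegBounded.zpow hτ.degBounded (hτ.degBounded_inv hq)
  have hbσ := DegBounded.zpow hσy.degBounded hσy.degBounded_inv
  have hb : ∀ s t : ℤ, DegBounded (τ ^ s * σy ^ t) := fun s t => (hbτ s).mul (hbσ t)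
  have hb' : ∀ s t : ℤ, DegBounded (τ ^ s * σy ^ t)⁻¹ := fun s t => by
    rw [mul_inv_rev, ← zpow_neg, ← zpow_neg]
    exact (hbσ _).mul (hbτ _)
  let S := orbitSetoid hcomm
  let rep : Quotient S → Polynomial (Polynomial k) := fun c => (Quotient.out c).1
  have hirr : ∀ c, Irreducible (rep c) := fun c => (Quotient.out c).2
  obtain ⟨A, hA, g, h, hgh⟩ := exists_finsupp_reduced hσy hb hb' rep hirr
    (fun d hd => ⟨Quotient.mk S ⟨d, hd⟩, S.symm (Quotient.mk_out (s := S) ⟨d, hd⟩)⟩) f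
  -- `T` collects the orbits that occur, and `M` exceeds every exponent index that occurs
  classical
  let T := A.support.image Prod.fst
  let M := (A.support.image Prod.snd).sup id + 1
  let e := T.equivFin
  refine ⟨g, h, T.card, fun _ => M, fun i j => A ((e.symm i).1, j), fun i => rep (e.symm i).1,
    fun i => hirr _, fun i j _ => hA _ _, ?_, ?_⟩
  · intro i i' s t hst
    have h1 : (e.symm i).1 = (e.symm i').1 := by
      rw [← Quotient.out_equiv_out]
      exact ⟨s, t, hst⟩
    exact e.symm.injective (Subtype.ext h1)
  · have hsub : A.support ⊆ T ×ˢ Finset.range M := by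
      intro p hp
      refine Finset.mem_product.mpr ⟨Finset.mem_image_of_mem _ hp, Finset.mem_range.mpr ?_⟩
      exact Nat.lt_succ_of_le (Finset.le_sup (f := id) (Finset.mem_image_of_mem Prod.snd hp))
    rw [Finsupp.sum_of_support_subset A hsub _ (by simp), Finset.sum_product,
      ← Finset.sum_coe_sort T, ← e.symm.sum_comp] at hgh
    rw [← hgh, sub_add_cancel]
end
end

section
/- Let q ∈ k satisfy q^m = 1 with m minimal, and assume k contains all m-th roots of unity. Then every f ∈ k(x,y) can be decomposed as f = τ_{x,q}(g) − g + c with g ∈ k(x,y) and c ∈ k(y)(x^m); moreover, f = τ_{x,q}(g') − g' for some g' ∈ k(x,y) if and only if c = 0. -/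
/-!
Put `K = k(y)(x^m)`. The element `x` is a root of `T^m - x^m ∈ K[T]`, hence integral over `K`, and
`k(x,y) = K(x)`; so every element of `k(x,y)` is a polynomial in `x` with coefficients in `K`
(`exists_aeval_Fx_eq`). As `τ` fixes `K` (`map_eq_self_of_mem_kyxm`), a monomial `a x^n` is an
eigenvector of eigenvalue `q^n`: if `q^n ≠ 1` it equals `τ g - g` with `g = a x^n / (q^n - 1)`, and
if `q^n = 1` then `m ∣ n` and the monomial lies in `K`. This gives the decomposition.

If `f` is also summable then `c = τ h - h` for some `h`, with `τ c = c`. Hence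
`τ^m h = h + m c`, while `τ^m = 1` (`iterate_eq_self`), so `m c = 0` and `c = 0`.
-/

open Polynomial

noncomputable section

variable (k : Type*) [Field k] [CharZero k]

variable {k}

variable (k) in
/-- The subfield `k(y)(x^m)` of `k(x,y)`, generated over `k` by `y` and `x^m`. -/
def kyxm (m : ℕ) : IntermediateField k (F2 k) :=
  IntermediateField.adjoin k {Fy k, (Fx k) ^ m}

/-- A subfield of `R(X)` containing the constants and `X` is everything. -/
theorem RatFunc.mem_subfield_of_C_of_X {R : Type*} [Field R] (S : Subfield (RatFunc R))
    (hC : ∀ r, RatFunc.C r ∈ S) (hX : RatFunc.X ∈ S) (f : RatFunc R) : f ∈ S := by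
  have hpoly : ∀ p : Polynomial R, algebraMap (Polynomial R) (RatFunc R) p ∈ S := by
    intro p
    induction p using Polynomial.induction_on' with
    | add p r hp hr => rw [map_add]; exact S.add_mem hp hr
    | monomial n a =>
      rw [← Polynomial.C_mul_X_pow_eq_monomial, map_mul, map_pow, RatFunc.algebraMap_C,
        RatFunc.algebraMap_X]
      exact S.mul_mem (hC a) (S.pow_mem hX n)
  rw [← RatFunc.num_div_denom f]
  exact S.div_mem (hpoly _) (hpoly _)

/-- The field `k(x,y)` is generated by `k`, `x` and `y`. -/
theorem mem_subfield_of_generators {k : Type*} [Field k] (S : Subfield (F2 k))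
    (hc : ∀ a, Fc k a ∈ S) (hx : Fx k ∈ S) (hy : Fy k ∈ S) (f : F2 k) : f ∈ S := by
  refine RatFunc.mem_subfield_of_C_of_X S (fun r => ?_) hy f
  exact RatFunc.mem_subfield_of_C_of_X (S.comap (RatFunc.C : RatFunc k →+* F2 k)) hc hx r

theorem algebraMap_eq_Fc {k : Type*} [Field k] (a : k) : algebraMap k (F2 k) a = Fc k a := by
  rw [IsScalarTower.algebraMap_apply k (RatFunc k) (F2 k)]
  rfl

theorem Fx_pow_mem_kyxm {k : Type*} [Field k] (m : ℕ) : Fx k ^ m ∈ kyxm k m :=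
  IntermediateField.subset_adjoin _ _ (by simp)

theorem Fy_mem_kyxm {k : Type*} [Field k] (m : ℕ) : Fy k ∈ kyxm k m :=
  IntermediateField.subset_adjoin _ _ (by simp)

/-- Every element of `k(x,y)` is a polynomial in `x` over `k(y)(x^m)`, because `x` is integral over
that field and generates `k(x,y)` over it. -/
theorem exists_aeval_Fx_eq {k : Type*} [Field k] {m : ℕ} (hm : 0 < m) (f : F2 k) :
    ∃ p : Polynomial (kyxm k m), aeval (Fx k) p = f := by
  have hint : IsIntegral (kyxm k m) (Fx k) := by
    refine IsIntegral.of_pow hm ?_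
    exact isIntegral_algebraMap (x := (⟨Fx k ^ m, Fx_pow_mem_kyxm m⟩ : kyxm k m))
  have hf : f ∈ IntermediateField.adjoin (kyxm k m) {Fx k} := by
    refine mem_subfield_of_generators
      (IntermediateField.adjoin (kyxm k m) {Fx k}).toSubfield (fun a => ?_) ?_ ?_ f
    · rw [← algebraMap_eq_Fc]
      exact (IntermediateField.adjoin (kyxm k m) {Fx k}).algebraMap_mem (algebraMap k (kyxm k m) a)
    · exact IntermediateField.mem_adjoin_simple_self _ _
    · exact (IntermediateField.adjoin (kyxm k m) {Fx k}).algebraMap_mem ⟨Fy k, Fy_mem_kyxm m⟩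
  rw [← IntermediateField.mem_toSubalgebra,
    IntermediateField.adjoin_simple_toSubalgebra_of_isAlgebraic hint.isAlgebraic,
    Algebra.adjoin_singleton_eq_range_aeval] at hf
  exact hf

theorem map_eq_self_of_mem_kyxm {k : Type*} [Field k] {q : k} {m : ℕ} (hq : q ^ m = 1)
    {τ : F2 k ≃+* F2 k} (hτ : IsQShiftX q τ) {c : F2 k} (hc : c ∈ kyxm k m) : τ c = c := by
  obtain ⟨h1, h2, h3⟩ := hτ
  induction hc using IntermediateField.adjoin_induction with
  | mem x hx =>
    rcases hx with rfl | rfl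
    · exact h2
    · rw [map_pow, h3, mul_pow, ← map_pow, hq, map_one, one_mul]
  | algebraMap a => rw [algebraMap_eq_Fc, h1]
  | add x y _ _ hx hy => rw [map_add, hx, hy]
  | inv x _ hx => rw [map_inv₀, hx]
  | mul x y _ _ hx hy => rw [map_mul, hx, hy]

theorem iterate_Fx {k : Type*} [Field k] {q : k} {τ : F2 k ≃+* F2 k} (hτ : IsQShiftX q τ) (n : ℕ) :
    τ^[n] (Fx k) = Fc k (q ^ n) * Fx k := by
  induction n with
  | zero => simp
  | succ n ih =>
    rw [Function.iterate_succ_apply', ih, map_mul, hτ.1, hτ.2.2, ← mul_assoc, ← map_mul, pow_succ]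

/-- The `q`-shift has order dividing `m` when `q^m = 1`. -/
theorem iterate_eq_self {k : Type*} [Field k] {q : k} {m : ℕ} (hq : q ^ m = 1)
    {τ : F2 k ≃+* F2 k} (hτ : IsQShiftX q τ) (h : F2 k) : τ^[m] h = h := by
  have hpow : ∀ z, ((τ : F2 k →+* F2 k) ^ m) z = τ^[m] z := fun z => by
    rw [RingHom.coe_pow]; rfl
  have := mem_subfield_of_generators
    (((τ : F2 k →+* F2 k) ^ m).eqLocusField (RingHom.id _)) (fun a => ?_) ?_ ?_ h
  · exact (hpow h).symm.trans this
  · exact (hpow _).trans (Function.iterate_fixed (hτ.1 a) m)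
  · exact (hpow _).trans (by rw [iterate_Fx hτ, hq, map_one, one_mul]; rfl)
  · exact (hpow _).trans (Function.iterate_fixed hτ.2.1 m)

theorem exists_reduced_form {k : Type*} [Field k] {q : k} {m : ℕ} (hm : 0 < m) (hq : q ^ m = 1)
    (hmin : ∀ n : ℕ, 0 < n → q ^ n = 1 → m ≤ n)
    {τ : F2 k ≃+* F2 k} (hτ : IsQShiftX q τ) (f : F2 k) :
    ∃ (g c : F2 k), c ∈ kyxm k m ∧ f = τ g - g + c := by
  obtain ⟨p, rfl⟩ := exists_aeval_Fx_eq hm f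
  induction p using Polynomial.induction_on' with
  | add p r hp hr =>
    obtain ⟨g, c, hc, h⟩ := hp
    obtain ⟨g', c', hc', h'⟩ := hr
    refine ⟨g + g', c + c', add_mem hc hc', ?_⟩
    rw [map_add, h, h', map_add]
    ring
  | monomial n a =>
    rw [aeval_monomial]
    by_cases hn : q ^ n = 1
    · -- By minimality of `m`, the exponent `n` is a multiple of `m`.
      have hdvd : m ∣ n := by
        have hord : orderOf q = m := (orderOf_le_of_pow_eq_one hm hq).antisymm
          (hmin _ (orderOf_pos_iff.2 (isOfFinOrder_iff_pow_eq_one.2 ⟨m, hm, hq⟩))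
            (pow_orderOf_eq_one q))
        rw [← hord]
        exact orderOf_dvd_of_pow_eq_one hn
      obtain ⟨d, rfl⟩ := hdvd
      refine ⟨0, _, mul_mem a.2 ?_, by rw [map_zero, sub_zero, zero_add]; rfl⟩
      rw [pow_mul]
      exact pow_mem (Fx_pow_mem_kyxm m) d
    · refine ⟨Fc k (q ^ n - 1)⁻¹ * ((a : F2 k) * Fx k ^ n), 0, zero_mem _, ?_⟩
      have hq1 : Fc k (q ^ n - 1)⁻¹ * (Fc k (q ^ n) - 1) = 1 := by
        rw [← map_one (Fc k), ← map_sub, ← map_mul, inv_mul_cancel₀ (sub_ne_zero.2 hn)]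
      rw [map_mul, map_mul, hτ.1, map_eq_self_of_mem_kyxm hq hτ a.2, map_pow, hτ.2.2, mul_pow,
        ← map_pow]
      change (a : F2 k) * Fx k ^ n = _
      linear_combination (-(a : F2 k) * Fx k ^ n) * hq1

/-- A summable `τ`-fixed element vanishes: `h = τ^m h = h + m c`. -/
theorem eq_zero_of_eq_map_sub {k : Type*} [Field k] [CharZero k] {q : k} {m : ℕ} (hm : 0 < m)
    (hq : q ^ m = 1) {τ : F2 k ≃+* F2 k} (hτ : IsQShiftX q τ) {c h : F2 k} (hc : τ c = c)
    (hh : c = τ h - h) : c = 0 := by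
  have hiter : ∀ n : ℕ, τ^[n] h = h + n * c := by
    intro n
    induction n with
    | zero => simp
    | succ n ih =>
      rw [Function.iterate_succ_apply', ih, map_add, map_mul, map_natCast, hc]
      push_cast
      linear_combination -hh
  have hmc : (m : F2 k) * c = 0 := by
    have := hiter m
    rw [iterate_eq_self hq hτ] at this
    linear_combination -this
  have : CharZero (F2 k) := charZero_of_injective_algebraMap (algebraMap k (F2 k)).injective
  exact (mul_eq_zero.1 hmc).resolve_left (Nat.cast_ne_zero.2 hm.ne')

/-- Lemma 2(b): let `q ∈ k` satisfy `q^m = 1` with `m` minimal, and assume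
`k` contains all `m`-th roots of unity. Every `f ∈ k(x,y)` can be decomposed as
`f = τ_{x,q}(g) - g + c` with `g ∈ k(x,y)` and `c ∈ k(y)(x^m)`; moreover, for any such
decomposition, `f` is `τ_{x,q}`-summable (i.e. `f = τ_{x,q}(g') - g'` for some `g'`)
iff `c = 0`. -/
theorem stmt8 {k : Type*} [Field k] [CharZero k]
    (q : k) (m : ℕ) (hm : 0 < m) (hq : q ^ m = 1)
    (hmin : ∀ n : ℕ, 0 < n → q ^ n = 1 → m ≤ n)
    (hall : Multiset.card ((X ^ m - C 1 : Polynomial k).roots) = m)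
    (τ : F2 k ≃+* F2 k) (hτ : IsQShiftX q τ)
    (f : F2 k) :
    (∃ (g c : F2 k), c ∈ kyxm k m ∧ f = τ g - g + c) ∧
    (∀ g c : F2 k, c ∈ kyxm k m → f = τ g - g + c →
      ((∃ g' : F2 k, f = τ g' - g') ↔ c = 0)) := by
  refine ⟨exists_reduced_form hm hq hmin hτ f, fun g c hc hf => ⟨?_, fun h0 => ⟨g, ?_⟩⟩⟩
  · rintro ⟨g', hg'⟩
    refine eq_zero_of_eq_map_sub hm hq hτ (h := g' - g) (map_eq_self_of_mem_kyxm hq hτ hc) ?_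
    rw [map_sub]
    linear_combination hg' - hf
  · rw [hf, h0, add_zero]
end
end

section
/- Let q ∈ k satisfy q^m = 1 with m minimal, and assume k contains all m-th roots of unity. Let f ∈ k(x,y) and suppose f = τ_{x,q}(g) − g + c with g ∈ k(x,y) and c ∈ k(y)(x^m). Then f is exact with respect to (τ_{x,q}, D_y), i.e., f = Δ_{x,q}(u) + D_y(v) for some u, v ∈ k(x,y), if and only if c = D_y(d) for some d ∈ k(y)(x^m). -/
/-!
Put `L = k(y)(x^m)` and let `T = ∑_{i < m} τ^i` be the trace operator. Since `x` is a root of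
`Z^m - x^m ∈ L[Z]`, every element of `k(x,y)` is an `L`-linear combination of powers `x^n`
(`mono_induction`). The map `τ` fixes `L` and multiplies `x^n` by `q^n`, while `D_y` maps `L` to
itself and kills `x`. Evaluating on the elements `l * x^n` with `l ∈ L` therefore gives:

* `τ^m = id`, so `T (τ g - g) = 0` (`iterate_eq_self`);
* `D_y` commutes with `τ`, hence with `T` (`Dy_comm`);
* `T` takes values in `L`, because `∑_{i < m} q^{in} = 0` when `m ∤ n` (`trace_mem`).

If `f = Δ u + D_y v`, applying `T` to `τ g - g + c = τ u - u + D_y v` yields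
`m c = D_y (T v)`, so `d = T v / m` works. The converse is immediate with `u = g`, `v = d`.
-/

open Polynomial

noncomputable section

variable (k : Type*) [Field k] [CharZero k]

variable {k}

namespace QShift

section

variable {k : Type*} [Field k] [CharZero k]

/-! ### Generation of `k(x,y)` over `k(y)(x^m)` by powers of `x` -/

lemma Fc_eq (a : k) : Fc k a = algebraMap k (F2 k) a := by
  rw [Fc, RingHom.comp_apply, ← RatFunc.algebraMap_eq_C, ← RatFunc.algebraMap_eq_C,
    ← IsScalarTower.algebraMap_apply k (RatFunc k) (F2 k)]

lemma Fy_mem (m : ℕ) : Fy k ∈ kyxm k m :=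
  IntermediateField.subset_adjoin _ _ (by simp)

lemma Fx_pow_mem (m : ℕ) : Fx k ^ m ∈ kyxm k m :=
  IntermediateField.subset_adjoin _ _ (by simp)

/-- A subfield of `k(x,y)` containing `k`, `x` and `y` is everything. -/
lemma mem_subfield (S : Subfield (F2 k)) (hk : ∀ a : k, Fc k a ∈ S) (hx : Fx k ∈ S)
    (hy : Fy k ∈ S) (v : F2 k) : v ∈ S := by
  have h1 : ∀ p : Polynomial k, RatFunc.C (algebraMap k[X] (RatFunc k) p) ∈ S := by
    intro p
    induction p using Polynomial.induction_on' with
    | add p q hp hq => rw [map_add, map_add]; exact S.add_mem hp hq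
    | monomial n a =>
      have : RatFunc.C (algebraMap k[X] (RatFunc k) (Polynomial.monomial n a))
          = Fc k a * Fx k ^ n := by
        rw [← Polynomial.C_mul_X_pow_eq_monomial]
        simp [Fc, Fx]
      rw [this]
      exact S.mul_mem (hk a) (S.pow_mem hx n)
  have h2 : ∀ r : RatFunc k, RatFunc.C r ∈ S := by
    intro r
    induction r using RatFunc.induction_on with
    | f p q hq => rw [map_div₀]; exact S.div_mem (h1 p) (h1 q)
  have h3 : ∀ p : Polynomial (RatFunc k), algebraMap (RatFunc k)[X] (F2 k) p ∈ S := by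
    intro p
    induction p using Polynomial.induction_on' with
    | add p q hp hq => rw [map_add]; exact S.add_mem hp hq
    | monomial n a =>
      have : algebraMap (RatFunc k)[X] (F2 k) (Polynomial.monomial n a)
          = RatFunc.C a * Fy k ^ n := by
        rw [← Polynomial.C_mul_X_pow_eq_monomial]
        simp [Fy]
      rw [this]
      exact S.mul_mem (h2 a) (S.pow_mem hy n)
  induction v using RatFunc.induction_on with
  | f p q hq => exact S.div_mem (h3 p) (h3 q)

lemma adjoin_Fx (m : ℕ) (hm : 0 < m) :
    Algebra.adjoin (kyxm k m) {Fx k} = ⊤ := by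
  have hint : IsIntegral (kyxm k m) (Fx k) := by
    apply IsIntegral.of_pow hm
    exact isIntegral_algebraMap (x := (⟨Fx k ^ m, Fx_pow_mem m⟩ : kyxm k m))
  rw [← IntermediateField.adjoin_simple_toSubalgebra_of_isAlgebraic hint.isAlgebraic]
  rw [eq_top_iff]
  intro v _
  refine mem_subfield (IntermediateField.adjoin (kyxm k m) {Fx k}).toSubfield ?_ ?_ ?_ v
  · intro a
    rw [Fc_eq]
    exact (IntermediateField.adjoin (kyxm k m) {Fx k}).algebraMap_mem
      (algebraMap k (kyxm k m) a)
  · exact IntermediateField.mem_adjoin_simple_self _ _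
  · exact (IntermediateField.adjoin (kyxm k m) {Fx k}).algebraMap_mem ⟨Fy k, Fy_mem m⟩

/-- Additive induction on `k(x,y)`: it is spanned over `k(y)(x^m)` by the powers of `x`. -/
@[elab_as_elim]
lemma mono_induction (m : ℕ) (hm : 0 < m) {P : F2 k → Prop}
    (hadd : ∀ a b, P a → P b → P (a + b))
    (hmono : ∀ l ∈ kyxm k m, ∀ n : ℕ, P (l * Fx k ^ n)) (v : F2 k) : P v := by
  have hv : v ∈ Algebra.adjoin (kyxm k m) {Fx k} := by rw [adjoin_Fx m hm]; trivial
  rw [Algebra.adjoin_singleton_eq_range_aeval] at hv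
  obtain ⟨p, rfl⟩ := hv
  induction p using Polynomial.induction_on' with
  | add p q hp hq => rw [map_add]; exact hadd _ _ hp hq
  | monomial n a =>
    have := hmono a.1 a.2 n
    simpa [Polynomial.aeval_monomial] using this

/-! ### The action of `τ` -/

variable {q : k} {m : ℕ} {τ : F2 k ≃+* F2 k} {Dy : F2 k → F2 k}

lemma tau_fix (hq : q ^ m = 1) (hτ : IsQShiftX q τ) {l : F2 k} (hl : l ∈ kyxm k m) :
    τ l = l := by
  obtain ⟨h1, h2, h3⟩ := hτ
  induction hl using IntermediateField.adjoin_induction with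
  | mem x hx =>
    rcases hx with rfl | hx
    · exact h2
    · rw [Set.mem_singleton_iff] at hx
      rw [hx, map_pow, h3, mul_pow, ← map_pow, hq, map_one, one_mul]
  | algebraMap a => rw [← Fc_eq]; exact h1 a
  | add x y _ _ hx hy => rw [map_add, hx, hy]
  | inv x _ hx => rw [map_inv₀, hx]
  | mul x y _ _ hx hy => rw [map_mul, hx, hy]

lemma tau_mono (hq : q ^ m = 1) (hτ : IsQShiftX q τ) {l : F2 k} (hl : l ∈ kyxm k m) (n : ℕ) :
    τ (l * Fx k ^ n) = Fc k (q ^ n) * (l * Fx k ^ n) := by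
  rw [map_mul, tau_fix hq hτ hl, map_pow, hτ.2.2, map_pow]
  ring

lemma tau_iter_mono (hq : q ^ m = 1) (hτ : IsQShiftX q τ) {l : F2 k} (hl : l ∈ kyxm k m)
    (n i : ℕ) : τ^[i] (l * Fx k ^ n) = Fc k ((q ^ n) ^ i) * (l * Fx k ^ n) := by
  induction i with
  | zero => simp
  | succ i ih =>
    rw [Function.iterate_succ_apply', ih, map_mul, hτ.1, tau_mono hq hτ hl, pow_succ, map_mul]
    ring

lemma tau_iter_add (i : ℕ) (a b : F2 k) : τ^[i] (a + b) = τ^[i] a + τ^[i] b := by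
  induction i with
  | zero => rfl
  | succ i ih => simp only [Function.iterate_succ_apply', ih, map_add]

lemma iterate_eq_self (hm : 0 < m) (hq : q ^ m = 1) (hτ : IsQShiftX q τ) (v : F2 k) :
    τ^[m] v = v := by
  refine mono_induction m hm (fun a b ha hb => ?_) (fun l hl n => ?_) v
  · rw [tau_iter_add, ha, hb]
  · rw [tau_iter_mono hq hτ hl, ← pow_mul, mul_comm n m, pow_mul, hq, one_pow, map_one, one_mul]

/-! ### The derivation `D_y` and its commutation with `τ` -/

lemma Dy_zero (hDy : IsDerivY Dy) : Dy 0 = 0 := by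
  have := hDy.1 0 0
  simpa using this

lemma Dy_Fc (hDy : IsDerivY Dy) (a : k) : Dy (Fc k a) = 0 := hDy.2.2.1 (RatFunc.C a)

lemma Dy_Fx_pow (hDy : IsDerivY Dy) (n : ℕ) : Dy (Fx k ^ n) = 0 := by
  have := hDy.2.2.1 (RatFunc.X ^ n)
  rwa [map_pow] at this

lemma Dy_mem (hDy : IsDerivY Dy) {l : F2 k} (hl : l ∈ kyxm k m) : Dy l ∈ kyxm k m := by
  induction hl using IntermediateField.adjoin_induction with
  | mem x hx =>
    rcases hx with rfl | hx
    · rw [hDy.2.2.2]; exact one_mem _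
    · rw [Set.mem_singleton_iff] at hx
      rw [hx, Dy_Fx_pow hDy]; exact zero_mem _
  | algebraMap a => rw [← Fc_eq, Dy_Fc hDy]; exact zero_mem _
  | add x y _ _ hx hy => rw [hDy.1]; exact add_mem hx hy
  | inv x hx0 hx =>
    rcases eq_or_ne x 0 with rfl | hne
    · rwa [inv_zero]
    · have h1 : Dy 1 = 0 := by simpa using Dy_Fc hDy (1 : k)
      have h2 := hDy.2.1 x x⁻¹
      rw [mul_inv_cancel₀ hne, h1] at h2
      have h3 : Dy x⁻¹ = -(x⁻¹ * (Dy x * x⁻¹)) := by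
        field_simp
        field_simp at h2
        linear_combination -h2
      rw [h3]
      exact neg_mem (mul_mem (inv_mem hx0) (mul_mem hx (inv_mem hx0)))
  | mul x y hx0 hy0 hx hy =>
    rw [hDy.2.1]; exact add_mem (mul_mem hx0 hy) (mul_mem hx hy0)

lemma Dy_comm (hm : 0 < m) (hq : q ^ m = 1) (hτ : IsQShiftX q τ) (hDy : IsDerivY Dy)
    (v : F2 k) : τ (Dy v) = Dy (τ v) := by
  refine mono_induction m hm (fun a b ha hb => ?_) (fun l hl n => ?_) v
  · rw [hDy.1, map_add, map_add, hDy.1, ha, hb]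
  · rw [tau_mono hq hτ hl, hDy.2.1 (Fc k _), Dy_Fc hDy, hDy.2.1 l, Dy_Fx_pow hDy, mul_zero,
      zero_add, zero_mul, add_zero, tau_mono hq hτ (Dy_mem hDy hl)]

/-! ### The trace -/

/-- The trace operator `∑_{i < m} τ^i`. -/
def tr (τ : F2 k ≃+* F2 k) (m : ℕ) (v : F2 k) : F2 k := ∑ i ∈ Finset.range m, τ^[i] v

lemma tr_add (a b : F2 k) : tr τ m (a + b) = tr τ m a + tr τ m b := by
  simp only [tr, tau_iter_add, Finset.sum_add_distrib]

lemma tr_tau (hm : 0 < m) (hq : q ^ m = 1) (hτ : IsQShiftX q τ) (v : F2 k) :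
    tr τ m (τ v) = tr τ m v := by
  have h1 := Finset.sum_range_succ (fun i => τ^[i] v) m
  rw [Finset.sum_range_succ', iterate_eq_self hm hq hτ] at h1
  simpa [tr] using h1

lemma tr_sub (a b : F2 k) : tr τ m (a - b) = tr τ m a - tr τ m b := by
  rw [eq_sub_iff_add_eq, ← tr_add, sub_add_cancel]

lemma tr_fix (hq : q ^ m = 1) (hτ : IsQShiftX q τ) {l : F2 k} (hl : l ∈ kyxm k m) :
    tr τ m l = m * l := by
  simp [tr, Function.iterate_fixed (tau_fix hq hτ hl)]

lemma tr_Dy (hm : 0 < m) (hq : q ^ m = 1) (hτ : IsQShiftX q τ) (hDy : IsDerivY Dy) (v : F2 k) :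
    tr τ m (Dy v) = Dy (tr τ m v) := by
  have h : ∀ i, τ^[i] (Dy v) = Dy (τ^[i] v) := by
    intro i
    induction i with
    | zero => rfl
    | succ i ih =>
      rw [Function.iterate_succ_apply', ih, Dy_comm hm hq hτ hDy, Function.iterate_succ_apply']
  let D : F2 k →+ F2 k := ⟨⟨Dy, Dy_zero hDy⟩, hDy.1⟩
  rw [tr, tr]
  simp only [h]
  exact (map_sum D _ _).symm

/-- On `l * x^n` the trace is `m * l * x^n` if `m ∣ n`; otherwise it vanishes, being a multiple of
the geometric sum of `q^n ≠ 1`, an `m`-th root of unity. -/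
lemma trace_mem (hm : 0 < m) (hq : q ^ m = 1) (hmin : ∀ n : ℕ, 0 < n → q ^ n = 1 → m ≤ n)
    (hτ : IsQShiftX q τ) (v : F2 k) : tr τ m v ∈ kyxm k m := by
  refine mono_induction m hm (fun a b ha hb => ?_) (fun l hl n => ?_) v
  · rw [tr_add]; exact add_mem ha hb
  · by_cases hn : m ∣ n
    · obtain ⟨j, rfl⟩ := hn
      have : l * Fx k ^ (m * j) ∈ kyxm k m := by
        rw [pow_mul]; exact mul_mem hl (pow_mem (Fx_pow_mem m) j)
      rw [tr_fix hq hτ this]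
      exact mul_mem (natCast_mem _ m) this
    · have hord : orderOf q = m :=
        le_antisymm (orderOf_le_of_pow_eq_one hm hq)
          (hmin _ (orderOf_pos_iff.2 (isOfFinOrder_iff_pow_eq_one.2 ⟨m, hm, hq⟩))
            (pow_orderOf_eq_one q))
      have hne : q ^ n ≠ 1 := by
        rwa [Ne, ← orderOf_dvd_iff_pow_eq_one, hord]
      have hs : ∑ i ∈ Finset.range m, (q ^ n) ^ i = 0 := by
        rw [geom_sum_eq hne, ← pow_mul, mul_comm, pow_mul, hq]
        simp
      rw [tr]
      simp only [tau_iter_mono hq hτ hl]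
      rw [← Finset.sum_mul, ← map_sum, hs, map_zero, zero_mul]
      exact zero_mem _

end

end QShift

/-- Theorem 1, case `∂_y = D_y`: let `q ∈ k` satisfy `q^m = 1` with `m`
minimal, and assume `k` contains all `m`-th roots of unity. Let `f ∈ k(x,y)` with
`f = τ_{x,q}(g) - g + c`, `c ∈ k(y)(x^m)`. Then `f` is exact with respect to
`(τ_{x,q}, D_y)`, i.e. `f = Δ_{x,q}(u) + D_y(v)` for some `u, v ∈ k(x,y)`, iff
`c = D_y(d)` for some `d ∈ k(y)(x^m)`. -/
theorem stmt9 {k : Type*} [Field k] [CharZero k]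
    (q : k) (m : ℕ) (hm : 0 < m) (hq : q ^ m = 1)
    (hmin : ∀ n : ℕ, 0 < n → q ^ n = 1 → m ≤ n)
    (hall : Multiset.card ((X ^ m - C 1 : Polynomial k).roots) = m)
    (τ : F2 k ≃+* F2 k) (hτ : IsQShiftX q τ)
    (Dy : F2 k → F2 k) (hDy : IsDerivY Dy)
    (f g c : F2 k) (hc : c ∈ kyxm k m) (hf : f = τ g - g + c) :
    (∃ u v : F2 k, f = (τ u - u) + Dy v) ↔
    (∃ d : F2 k, d ∈ kyxm k m ∧ c = Dy d) := by
  open QShift in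
  constructor
  · rintro ⟨u, v, huv⟩
    have hm0 : (m : k) ≠ 0 := by exact_mod_cast hm.ne'
    have h := congrArg (tr τ m) (hf.symm.trans huv)
    rw [tr_add, tr_sub, tr_tau hm hq hτ, sub_self, zero_add, tr_fix hq hτ hc, tr_add, tr_sub,
      tr_tau hm hq hτ, sub_self, zero_add, tr_Dy hm hq hτ hDy] at h
    refine ⟨Fc k (m : k)⁻¹ * tr τ m v, mul_mem ?_ (trace_mem hm hq hmin hτ v), ?_⟩
    · rw [Fc_eq]; exact (kyxm k m).algebraMap_mem _
    · rw [hDy.2.1, Dy_Fc hDy, zero_mul, add_zero, ← h, ← map_natCast (Fc k) m, ← mul_assoc,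
        ← map_mul, inv_mul_cancel₀ hm0, map_one, one_mul]
  · rintro ⟨d, _, rfl⟩
    exact ⟨g, d, hf⟩
end
end

section
/- Let q ∈ k \ {0} be not a root of unity and let p ∈ k[x,y] be an irreducible polynomial. If τ_{x,q}^i σ_y^j(p) = p for some integers i, j with i ≠ 0, then p ∈ k[y]. -/
/-!
Write `p = ∑ₐ cₐ(y) xᵃ`. Invariance under `x ↦ qⁱx`, `y ↦ y + j` means
`qⁱᵃ cₐ(y + j) = cₐ(y)` for every `a`. The substitution `y ↦ y + j` preserves leading
coefficients, so `cₐ ≠ 0` forces `qⁱᵃ = 1`, and hence `a = 0` because `q` is not a root of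
unity and `i ≠ 0`. Thus `p = c₀(y)`.
-/

open Polynomial

noncomputable section

variable (k : Type*) [Field k] [CharZero k]

variable {k}

lemma zpow_qShift {q : k} (hq : q ≠ 0) {τ : F2 k ≃+* F2 k} (hτ : IsQShiftX q τ) (i : ℤ) :
    IsQShiftX (q ^ i) (τ ^ i) := by
  obtain ⟨h1, h2, h3⟩ := hτ
  have hinv : ∀ {a b}, τ a = b → τ⁻¹ b = a := fun h => by
    rw [← h]; exact τ.symm_apply_apply _
  have hx : τ⁻¹ (Fx k) = Fc k q⁻¹ * Fx k := by
    apply hinv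
    rw [map_mul, h1, h3, ← mul_assoc, ← map_mul, inv_mul_cancel₀ hq, map_one, one_mul]
  induction i using Int.induction_on with
  | zero => exact ⟨fun c => by simp, by simp, by simp⟩
  | succ n ih =>
    obtain ⟨g1, g2, g3⟩ := ih
    refine ⟨fun c => ?_, ?_, ?_⟩ <;> rw [zpow_add_one, RingAut.mul_apply]
    · rw [h1, g1]
    · rw [h2, g2]
    · rw [h3, map_mul, g1, g3, ← mul_assoc, ← map_mul, zpow_add_one₀ hq, mul_comm q]
  | pred n ih =>
    obtain ⟨g1, g2, g3⟩ := ih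
    refine ⟨fun c => ?_, ?_, ?_⟩ <;> rw [zpow_sub_one, RingAut.mul_apply]
    · rw [hinv (h1 c), g1]
    · rw [hinv h2, g2]
    · rw [hx, map_mul, g1, g3, ← mul_assoc, ← map_mul, zpow_sub_one₀ hq, mul_comm q⁻¹]

lemma zpow_shiftY {σ : F2 k ≃+* F2 k} (hσ : IsShiftY σ) (j : ℤ) :
    (∀ c : k, (σ ^ j) (Fc k c) = Fc k c) ∧ (σ ^ j) (Fx k) = Fx k ∧
      (σ ^ j) (Fy k) = Fy k + j := by
  obtain ⟨h1, h2, h3⟩ := hσ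
  have hinv : ∀ {a b}, σ a = b → σ⁻¹ b = a := fun h => by
    rw [← h]; exact σ.symm_apply_apply _
  have hy : σ⁻¹ (Fy k) = Fy k - 1 := hinv (by rw [map_sub, h3, map_one, add_sub_cancel_right])
  induction j using Int.induction_on with
  | zero => exact ⟨fun c => by simp, by simp, by simp⟩
  | succ n ih =>
    obtain ⟨g1, g2, g3⟩ := ih
    refine ⟨fun c => ?_, ?_, ?_⟩ <;> rw [zpow_add_one, RingAut.mul_apply]
    · rw [h1, g1]
    · rw [h2, g2]
    · rw [h3, map_add, g3, map_one]; push_cast; ring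
  | pred n ih =>
    obtain ⟨g1, g2, g3⟩ := ih
    refine ⟨fun c => ?_, ?_, ?_⟩ <;> rw [zpow_sub_one, RingAut.mul_apply]
    · rw [hinv (h1 c), g1]
    · rw [hinv h2, g2]
    · rw [hy, map_sub, g3, map_one]; push_cast; ring

lemma FPP_injective : Function.Injective (FPP k) :=
  (RatFunc.algebraMap_injective (RatFunc k)).comp
    (Polynomial.map_injective _ (RatFunc.algebraMap_injective k))

lemma FPP_C_C (c : k) : FPP k (C (C c)) = Fc k c := by
  simp [FPP, FP, PP, Fc]

lemma FPP_C_X : FPP k (C X) = Fx k := by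
  simp [FPP, FP, PP, Fx]

lemma FPP_X : FPP k X = Fy k := by
  simp [FPP, FP, PP, Fy]

/-- The substitution `x ↦ Q x`, `y ↦ y + j` on `k[y][x]`, the polynomial ring with outer
variable `x`. -/
def qShiftShift (Q : k) (j : ℤ) : Polynomial (Polynomial k) →+* Polynomial (Polynomial k) :=
  (compRingHom (C (C Q) * X)).comp (mapRingHom (compRingHom (X + C (j : k))))

lemma coeff_qShiftShift (Q : k) (j : ℤ) (r : Polynomial (Polynomial k)) (a : ℕ) :
    (qShiftShift Q j r).coeff a = (r.coeff a).comp (X + C (j : k)) * C (Q ^ a) := by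
  simp [qShiftShift, comp_C_mul_X_coeff]

/-- A fixed point of `x ↦ Q x`, `y ↦ y + j` has no terms of positive degree in `x`: the
leading coefficients in `y` of its `x`-coefficients are multiplied by powers of `Q`. -/
lemma coeff_eq_zero_of_fixed {Q : k} (hQ : ∀ n : ℕ, 0 < n → Q ^ n ≠ 1) {j : ℤ}
    {r : Polynomial (Polynomial k)} (hr : qShiftShift Q j r = r) {a : ℕ} (ha : 0 < a) :
    r.coeff a = 0 := by
  by_contra h
  have h1 := congrArg leadingCoeff (coeff_qShiftShift Q j r a)
  rw [hr, leadingCoeff_mul, leadingCoeff_C, leadingCoeff_comp (by rw [natDegree_X_add_C]; simp),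
    leadingCoeff_X_add_C, one_pow, mul_one] at h1
  exact hQ a ha (mul_left_cancel₀ (leadingCoeff_ne_zero.mpr h) (by rw [mul_one]; exact h1.symm))

/-- Lemma 3: let `q ∈ k \ {0}` not be a root of unity and let
`p ∈ k[x,y]` be irreducible. If `τ_{x,q}^i σ_y^j(p) = p` for some `i, j ∈ ℤ` with
`i ≠ 0`, then `p ∈ k[y]`. -/
theorem stmt13 {k : Type*} [Field k] [CharZero k]
    (q : k) (hq : q ≠ 0) (hqru : NotRootOfUnity q)
    (τ : F2 k ≃+* F2 k) (hτ : IsQShiftX q τ)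
    (σy : F2 k ≃+* F2 k) (hσy : IsShiftY σy)
    (p : Polynomial (Polynomial k)) (hp : Irreducible p)
    (i j : ℤ) (hi : i ≠ 0)
    (hfix : (τ ^ i) ((σy ^ j) (FPP k p)) = FPP k p) :
    ∃ e : Polynomial k, p = PY k e := by
  obtain ⟨t1, t2, t3⟩ := zpow_qShift hq hτ i
  obtain ⟨s1, s2, s3⟩ := zpow_shiftY hσy j
  -- `G` embeds `k[y][x]` (outer variable `x`) into `k(x,y)`.
  let G : Polynomial (Polynomial k) →+* F2 k :=
    (FPP k).comp (Bivariate.swap (R := k) : _ →+* _)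
  have hG : ∀ r, G r = FPP k (Bivariate.swap (R := k) r) := fun _ => rfl
  have hcomm : ((τ ^ i : F2 k ≃+* F2 k) : F2 k →+* F2 k).comp
      (((σy ^ j : F2 k ≃+* F2 k) : F2 k →+* F2 k).comp G) = G.comp (qShiftShift (q ^ i) j) := by
    have hGc : ∀ c, G (C (C c)) = Fc k c := fun c => by
      rw [hG, Bivariate.swap_C_C, FPP_C_C]
    have hGy : G (C X) = Fy k := by rw [hG, Bivariate.swap_X, FPP_X]
    have hGx : G X = Fx k := by rw [hG, Bivariate.swap_Y, FPP_C_X]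
    ext c
    · simp [qShiftShift, hGc, s1, t1]
    · simp [qShiftShift, hGy, s3, t2]
    · simp [qShiftShift, hGx, hGc, s2, t3]
  have hQ : ∀ n : ℕ, 0 < n → (q ^ i) ^ n ≠ 1 := by
    intro n hn h
    rw [← zpow_natCast, ← zpow_mul] at h
    have h2 : q ^ (i * n).natAbs = 1 := by
      rcases Int.natAbs_eq (i * n) with h3 | h3 <;> rw [h3] at h
      · exact_mod_cast h
      · rw [zpow_neg, inv_eq_one] at h; exact_mod_cast h
    refine hqru _ (Int.natAbs_pos.mpr (mul_ne_zero hi ?_)) h2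
    exact_mod_cast hn.ne'
  obtain ⟨r, rfl⟩ := (Bivariate.swap (R := k)).surjective p
  have hr : qShiftShift (q ^ i) j r = r := by
    apply (Bivariate.swap (R := k)).injective
    apply FPP_injective
    rw [← hfix]
    exact (RingHom.congr_fun hcomm r).symm
  have hr0 : r = C (r.coeff 0) := by
    ext1 a
    rcases Nat.eq_zero_or_pos a with rfl | ha
    · simp
    · rw [coeff_eq_zero_of_fixed hQ hr ha, coeff_C_of_ne_zero ha.ne']
  refine ⟨r.coeff 0, ?_⟩
  conv_lhs => rw [hr0]
  rw [Bivariate.swap_C]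
  rfl
end
end

section
/- Let q ∈ k \ {0} be not a root of unity. Let f = a/d^m where m ∈ ℕ, m ≥ 1, d ∈ k[x,y] is irreducible, and a ∈ k(x)[y] is nonzero with deg_y(a) < deg_y(d). Then f is exact with respect to (Δ_{x,q}, Δ_y), i.e., f = Δ_{x,q}(g) + Δ_y(h) for some g, h ∈ k(x,y), if and only if d ∈ k[y] and a = Δ_{x,q}(b) for some b ∈ k(x)[y]. -/
/-!
For an irreducible `p ∈ k(x)[y]` every `f ∈ k(x,y)` has a `p`-adic expansion whose digits are
polynomials in `y` of degree less than `deg p`. The coefficient of `p ^ (-m)` (`coef`) is additive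
in `f`, is compatible with automorphisms that preserve `k(x)[y]` and degrees (`coef_map`), and is
zero for all but finitely many `p` in a family of pairwise non-associated ones (`finite_coef`).

The key alternative is `mem_ky_of_dvd`: since `q` is not a root of unity, `d` is associated to
`d(qⁱ x, y + j)` with `i ≠ 0` only if `d ∈ k[y]`. Moreover `d` is never associated to `d(x, y + j)`
with `j ≠ 0`, by characteristic zero (`shiftAut_free`).

Suppose `a / d ^ m` is exact. If `d ∉ k[y]`, its orbit under both shifts is free; the sum over
the orbit of the coefficients, each transported back to `d`, vanishes on every exact element and
takes the value `a` on `a / d ^ m`, so `a = 0`, a contradiction (`eq_zero_of_free_orbit`). If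
`d ∈ k[y]`, the `q`-shift fixes `d`, and summing only over the shifts in `y` gives
`a = Δ_{x,q} b`, where `b` is the sum attached to `g` (`exists_of_fixed`). Conversely, if
`d ∈ k[y]` and `a = Δ_{x,q} b`, then `a / d ^ m = Δ_{x,q} (b / d ^ m)`.
-/

open Polynomial

noncomputable section

variable (k : Type*) [Field k] [CharZero k]

variable {k}

/-! ### Coefficients of `p`-adic expansions -/

section Coef
variable {K : Type*} [Field K]

local notation "𝔦" => algebraMap K[X] (RatFunc K)

/-- `c` is the coefficient of `p ^ (-(m + 1))` in the `p`-adic expansion of `f`, the digits of the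
expansion being polynomials of degree less than `deg p`. The term with numerator `w` collects the
poles of order greater than `m + 1`, and the term with numerator `t` is an element of
`p ^ (-m)` times the local ring at `p`. -/
def IsCoef (p : K[X]) (m : ℕ) (f : RatFunc K) (c : K[X]) : Prop :=
  c.degree < p.degree ∧ ∃ (n : ℕ) (w t D : K[X]), w.degree < (p ^ n).degree ∧ ¬ p ∣ D ∧
    f = 𝔦 w / 𝔦 p ^ (m + 1 + n) + 𝔦 c / 𝔦 p ^ (m + 1) + 𝔦 t / (𝔦 D * 𝔦 p ^ m)

lemma algebraMap_ratFunc_ne_zero {p : K[X]} (hp : p ≠ 0) : 𝔦 p ≠ 0 := by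
  simpa using hp

lemma IsCoef.exists {p : K[X]} (hp : Irreducible p) (m : ℕ) (f : RatFunc K) :
    ∃ c, IsCoef p m f c := by
  have hp0 := hp.ne_zero
  obtain ⟨n, D, hD, hden⟩ := WfDvdMonoid.max_power_factor (f.denom_ne_zero) hp
  -- A Bézout relation splits `f` into a part with denominator `D` and one with a power of `p`;
  -- two divisions with remainder then read off the digits of the latter.
  have hcop : IsCoprime (p ^ (m + 1 + n)) D := ((hp.coprime_iff_not_dvd).mpr hD).pow_left
  have hD0 : D ≠ 0 := fun h => hD (h ▸ dvd_zero p)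
  obtain ⟨u, v, huv⟩ := hcop
  set N := f.num * p ^ (m + 1) with hN
  set Q := N * v / p ^ n with hQ
  have e1 : N * v = N * v % p ^ n + p ^ n * (Q % p + p * (Q / p)) := by
    rw [EuclideanDomain.mod_add_div, EuclideanDomain.mod_add_div]
  refine ⟨Q % p, degree_mod_lt _ hp0, n, N * v % p ^ n, D * (Q / p) + N * u * p ^ m, D,
    degree_mod_lt _ (pow_ne_zero _ hp0), hD, ?_⟩
  have hf : f = 𝔦 f.num / (𝔦 p ^ n * 𝔦 D) := by
    conv_lhs => rw [← f.num_div_denom, hden]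
    simp
  have hp' := algebraMap_ratFunc_ne_zero hp0
  have hD' := algebraMap_ratFunc_ne_zero hD0
  have e2 := congrArg 𝔦 e1
  have e3 := congrArg 𝔦 huv
  have e4 := congrArg 𝔦 hN
  simp only [map_add, map_mul, map_pow, map_one] at e2 e3 e4 ⊢
  rw [hf]
  generalize 𝔦 (N * v % p ^ n) = W at *
  generalize 𝔦 (Q % p) = C at *
  generalize 𝔦 (Q / p) = B at *
  generalize 𝔦 N = N' at *
  generalize 𝔦 f.num = M at *
  generalize 𝔦 p = P at *
  generalize 𝔦 D = D' at *
  generalize 𝔦 u = U at *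
  generalize 𝔦 v = V at *
  clear hf
  have hW : W = N' * V - P ^ n * (C + P * B) := by rw [e2]; ring
  have hM : M * P ^ (m + 1) = N' * U * P ^ (m + 1 + n) + D' * (N' * V) := by
    rw [← e4]; linear_combination (-N') * e3
  rw [hW]
  field_simp
  linear_combination P ^ (2 * m + 1 + n) * hM

lemma IsCoef.sub {p : K[X]} (hp : Irreducible p) {m : ℕ} {f g : RatFunc K} {c b : K[X]}
    (h : IsCoef p m f c) (h' : IsCoef p m g b) : IsCoef p m (f - g) (c - b) := by
  obtain ⟨hc, n, w, t, D, hw, hD, rfl⟩ := h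
  obtain ⟨hb, n', w', t', D', hw', hD', rfl⟩ := h'
  have hp0 := hp.ne_zero
  have hlt : ∀ {n l : ℕ} {w : K[X]}, w.degree < (p ^ n).degree →
      (w * p ^ l).degree < (p ^ (n + l)).degree := by
    intro n l w hw
    rw [pow_add, degree_mul, degree_mul]
    exact WithBot.add_lt_add_right (degree_ne_bot.mpr (pow_ne_zero _ hp0)) hw
  refine ⟨(degree_sub_le _ _).trans_lt (max_lt hc hb), n + n', w * p ^ n' - w' * p ^ n,
    t * D' - t' * D, D * D', ?_, ?_, ?_⟩
  · refine (degree_sub_le _ _).trans_lt (max_lt (hlt hw) ?_)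
    rw [add_comm n]
    exact hlt hw'
  · exact fun h => (hp.prime.dvd_or_dvd h).elim hD hD'
  · have hp' := algebraMap_ratFunc_ne_zero hp0
    have h1 := algebraMap_ratFunc_ne_zero (fun h => hD (h ▸ dvd_zero p) : D ≠ 0)
    have h2 := algebraMap_ratFunc_ne_zero (fun h => hD' (h ▸ dvd_zero p) : D' ≠ 0)
    simp only [map_sub, map_mul, map_pow]
    field_simp
    ring

/-- Uniqueness of the digit, in the form used after subtracting: after clearing denominators
`p ^ (n + 1)` divides `w + c * p ^ n`, which has too small a degree to be nonzero. -/
lemma IsCoef.eq_zero {p : K[X]} (hp : Irreducible p) {m : ℕ} {c : K[X]}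
    (h : IsCoef p m 0 c) : c = 0 := by
  obtain ⟨hc, n, w, t, D, hw, hD, h⟩ := h
  have hp0 := hp.ne_zero
  have hp' := algebraMap_ratFunc_ne_zero hp0
  have h1 := algebraMap_ratFunc_ne_zero (fun h => hD (h ▸ dvd_zero p) : D ≠ 0)
  have key : D * (w + c * p ^ n) + t * p ^ (n + 1) = 0 := by
    apply RatFunc.algebraMap_injective K
    simp only [map_add, map_mul, map_pow, map_zero]
    field_simp at h
    refine mul_right_cancel₀ (pow_ne_zero (2 * m + 1) hp') ?_
    linear_combination -h
  have hdvd : p ^ (n + 1) ∣ w + c * p ^ n := by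
    have : IsCoprime (p ^ (n + 1)) D := ((hp.coprime_iff_not_dvd).mpr hD).pow_left
    refine this.dvd_of_dvd_mul_left ⟨-t, ?_⟩
    linear_combination key
  have hdeg : (c * p ^ n).degree < (p ^ (n + 1)).degree := by
    rw [pow_succ', degree_mul, degree_mul]
    exact WithBot.add_lt_add_right (degree_ne_bot.mpr (pow_ne_zero _ hp0)) hc
  have hz : w + c * p ^ n = 0 := by
    refine eq_zero_of_dvd_of_degree_lt hdvd ((degree_add_le _ _).trans_lt (max_lt ?_ hdeg))
    exact hw.trans_le (degree_le_of_dvd (pow_dvd_pow _ n.le_succ) (pow_ne_zero _ hp0))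
  have hw0 : w = 0 :=
    eq_zero_of_dvd_of_degree_lt ⟨-c, by linear_combination hz⟩ hw
  simpa [hw0, hp0] using hz

open Classical in
/-- The coefficient of `p ^ (-(m + 1))` in the `p`-adic expansion of `f`; meaningful for
irreducible `p`, with junk value `0` if there is no such coefficient. -/
def coef (p : K[X]) (m : ℕ) (f : RatFunc K) : K[X] :=
  if h : ∃ c, IsCoef p m f c then h.choose else 0

lemma coef_spec {p : K[X]} (hp : Irreducible p) (m : ℕ) (f : RatFunc K) :
    IsCoef p m f (coef p m f) := by
  have h := IsCoef.exists hp m f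
  rw [coef, dif_pos h]
  exact h.choose_spec

lemma IsCoef.coef_eq {p : K[X]} (hp : Irreducible p) {m : ℕ} {f : RatFunc K} {c : K[X]}
    (h : IsCoef p m f c) : coef p m f = c := by
  have := (coef_spec hp m f).sub hp h
  rw [sub_self] at this
  exact sub_eq_zero.mp (this.eq_zero hp)

lemma coef_sub {p : K[X]} (hp : Irreducible p) (m : ℕ) (f g : RatFunc K) :
    coef p m (f - g) = coef p m f - coef p m g :=
  ((coef_spec hp m f).sub hp (coef_spec hp m g)).coef_eq hp

lemma coef_add {p : K[X]} (hp : Irreducible p) (m : ℕ) (f g : RatFunc K) :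
    coef p m (f + g) = coef p m f + coef p m g := by
  rw [eq_comm, ← eq_sub_iff_add_eq, ← coef_sub hp, add_sub_cancel_right]

lemma coef_of_not_dvd {p : K[X]} (hp : Irreducible p) (m : ℕ) {N D : K[X]} (hD : ¬ p ∣ D) :
    coef p m (𝔦 N / 𝔦 D) = 0 := by
  have hp0 := hp.ne_zero
  have hp' := algebraMap_ratFunc_ne_zero hp0
  refine IsCoef.coef_eq hp ⟨?_, 0, 0, N * p ^ m, D, ?_, hD, ?_⟩
  · simpa [bot_lt_iff_ne_bot] using hp0
  · simp
  · have h1 := algebraMap_ratFunc_ne_zero (fun h => hD (h ▸ dvd_zero p) : D ≠ 0)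
    simp only [map_mul, map_pow, map_zero]
    field_simp
    ring

lemma coef_self {p : K[X]} (hp : Irreducible p) (m : ℕ) {a : K[X]} (ha : a.degree < p.degree) :
    coef p m (𝔦 a / 𝔦 p ^ (m + 1)) = a := by
  refine IsCoef.coef_eq hp ⟨ha, 0, 0, 0, 1, by simp, hp.not_dvd_one, by simp⟩

/-- Degree-preserving automorphisms of `K[X]` are compatible with taking coefficients. -/
lemma coef_map {p : K[X]} (hp : Irreducible p) (m : ℕ) (φ : RingAut K[X])
    (hdeg : ∀ r, (φ r).degree = r.degree) (Φ : RingAut (RatFunc K))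
    (hΦ : ∀ r, Φ (𝔦 r) = 𝔦 (φ r)) (f : RatFunc K) :
    coef (φ p) m (Φ f) = φ (coef p m f) := by
  have hp2 : Irreducible (φ p) := (MulEquiv.irreducible_iff φ).mpr hp
  obtain ⟨hc, n, w, t, D, hw, hD, h⟩ := coef_spec hp m f
  refine IsCoef.coef_eq hp2 ⟨by rwa [hdeg, hdeg], n, φ w, φ t, φ D, ?_, ?_, ?_⟩
  · rwa [← map_pow, hdeg, hdeg]
  · rwa [map_dvd_iff φ]
  · conv_lhs => rw [h]
    simp only [map_add, map_mul, map_div₀, map_pow, hΦ]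

/-- Only the finitely many irreducible factors of the denominator can give a nonzero coefficient. -/
lemma finite_coef {I : Type*} {p : I → K[X]} (hp : ∀ i, Irreducible (p i))
    (hinj : ∀ i j, p i ∣ p j → i = j) (m : ℕ) (f : RatFunc K) :
    {i | coef (p i) m f ≠ 0}.Finite := by
  classical
  have hsub : {i | coef (p i) m f ≠ 0} ⊆ {i | p i ∣ f.denom} := by
    intro i hi
    by_contra hd
    apply hi
    rw [← f.num_div_denom]
    exact coef_of_not_dvd (hp i) m hd
  refine Set.Finite.subset ?_ hsub
  have hex : ∀ i : {i | p i ∣ f.denom}, ∃ r ∈ UniqueFactorizationMonoid.normalizedFactors f.denom,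
      Associated (p i) r := fun i =>
    UniqueFactorizationMonoid.exists_mem_normalizedFactors_of_dvd f.denom_ne_zero (hp i) i.2
  choose r hr hra using hex
  refine Finite.of_injective
    (fun i => (⟨r i, Multiset.mem_toFinset.mpr (hr i)⟩ :
      (UniqueFactorizationMonoid.normalizedFactors f.denom).toFinset)) ?_
  intro i j hij
  have : r i = r j := by simpa using hij
  exact Subtype.ext (hinj _ _ ((hra i).trans (this ▸ (hra j).symm)).dvd)
end Coef

/-! ### Summing coefficients over an orbit -/

section Telescoping
variable {K : Type*} [Field K]

local notation "𝔦" => algebraMap K[X] (RatFunc K)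

/-- If the members of the `⟨T, S⟩`-orbit of `P` are pairwise non-associated, then `a / P ^ (m + 1)`
is exact only for `a = 0`: the sum over the orbit of all coefficients, transported back to `P`,
is unchanged by `τ` and by `σ`, so it vanishes on exact elements, while it equals `a` on
`a / P ^ (m + 1)`. -/
theorem eq_zero_of_free_orbit {T S : RingAut K[X]} (hTS : Commute T S)
    (hTdeg : ∀ r, (T r).degree = r.degree) (hSdeg : ∀ r, (S r).degree = r.degree)
    {τ σ : RingAut (RatFunc K)} (hτ : ∀ r, τ (𝔦 r) = 𝔦 (T r)) (hσ : ∀ r, σ (𝔦 r) = 𝔦 (S r))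
    {P : K[X]} (hP : Irreducible P)
    (hfree : ∀ i j : ℤ, P ∣ (T ^ i * S ^ j) P → i = 0 ∧ j = 0)
    {m : ℕ} {a : K[X]} (ha : a.degree < P.degree) {g h : RatFunc K}
    (H : 𝔦 a / 𝔦 P ^ (m + 1) = (τ g - g) + (σ h - h)) : a = 0 := by
  set A : ℤ × ℤ → RingAut K[X] := fun x => T ^ x.1 * S ^ x.2 with hA
  have hAT : ∀ i j, A (i, j) = T * A (i - 1, j) := by
    intro i j
    simp only [hA]
    rw [← mul_assoc, ← zpow_one_add]
    congr 2
    ring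
  have hAS : ∀ i j, A (i, j) = S * A (i, j - 1) := by
    intro i j
    simp only [hA]
    rw [← mul_assoc, ← (hTS.zpow_left i).eq, mul_assoc, ← zpow_one_add]
    congr 2
    ring
  have hirr : ∀ x, Irreducible (A x P) := fun x => (MulEquiv.irreducible_iff (A x)).mpr hP
  have hinj : ∀ x y, A x P ∣ A y P → x = y := by
    intro x y hxy
    have h1 : (A x)⁻¹ * A y = T ^ (y.1 - x.1) * S ^ (y.2 - x.2) := by
      rw [inv_mul_eq_iff_eq_mul]
      simp only [hA]
      rw [mul_assoc, ← mul_assoc (S ^ x.2), ← (hTS.zpow_zpow (y.1 - x.1) x.2).eq, mul_assoc,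
        ← zpow_add, ← mul_assoc, ← zpow_add]
      congr 2 <;> ring
    have h2 : P ∣ ((A x)⁻¹ * A y) P := by
      have := map_dvd (A x)⁻¹ hxy
      rwa [← RingAut.mul_apply, inv_mul_cancel, RingAut.one_apply, ← RingAut.mul_apply] at this
    rw [h1] at h2
    obtain ⟨e1, e2⟩ := hfree _ _ h2
    exact Prod.ext (by omega) (by omega)
  set G : RatFunc K → ℤ × ℤ → K[X] := fun f x => (A x)⁻¹ (coef (A x P) m f) with hG
  have hfin : ∀ f, Function.HasFiniteSupport (G f) := by
    intro f
    refine (finite_coef hirr hinj m f).subset fun x hx => ?_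
    simpa [hG] using hx
  have hfin2 : ∀ f f', Function.HasFiniteSupport (fun x => G f x - G f' x) :=
    fun f f' => (hfin f).sub (hfin f')
  have hcancel : ∀ (φ ψ : RingAut K[X]) (r : K[X]), (φ * ψ)⁻¹ (φ r) = ψ⁻¹ r := by
    intro φ ψ r
    rw [← RingAut.mul_apply]
    congr 1
    group
  have hGτ : ∀ f x, G (τ f) x = G f (x - (1, 0)) := by
    rintro f ⟨i, j⟩
    simp only [hG, Prod.mk_sub_mk, sub_zero]
    rw [hAT, RingAut.mul_apply, coef_map (hirr _) m T hTdeg τ hτ, hcancel]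
  have hGσ : ∀ f x, G (σ f) x = G f (x - (0, 1)) := by
    rintro f ⟨i, j⟩
    simp only [hG, Prod.mk_sub_mk, sub_zero]
    rw [hAS, RingAut.mul_apply, coef_map (hirr _) m S hSdeg σ hσ, hcancel]
  have hsumτ : ∀ f, ∑ᶠ x, G (τ f) x = ∑ᶠ x, G f x := by
    intro f
    simp only [hGτ]
    exact finsum_comp_equiv (Equiv.subRight ((1, 0) : ℤ × ℤ))
  have hsumσ : ∀ f, ∑ᶠ x, G (σ f) x = ∑ᶠ x, G f x := by
    intro f
    simp only [hGσ]
    exact finsum_comp_equiv (Equiv.subRight ((0, 1) : ℤ × ℤ))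
  have hsum : ∑ᶠ x, G ((τ g - g) + (σ h - h)) x = 0 := by
    have : ∀ x, G ((τ g - g) + (σ h - h)) x = (G (τ g) x - G g x) + (G (σ h) x - G h x) := by
      intro x
      simp only [hG, coef_add (hirr x), coef_sub (hirr x), map_add, map_sub]
    simp only [this]
    rw [finsum_add_distrib (hfin2 _ _) (hfin2 _ _),
      finsum_sub_distrib (hfin _) (hfin _), finsum_sub_distrib (hfin _) (hfin _), hsumτ, hsumσ,
      sub_self, sub_self, add_zero]
  have hA0 : A 0 = 1 := by simp [hA]
  rw [← H, finsum_eq_single _ 0] at hsum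
  · simpa [hG, hA0, coef_self hP m ha] using hsum
  · intro x hx
    have hnd : ¬ A x P ∣ P ^ (m + 1) := fun hd => hx (hinj x 0 (by
      simpa [hA0] using (hirr x).prime.dvd_of_dvd_pow hd))
    simp only [hG]
    rw [← map_pow, coef_of_not_dvd (hirr x) m hnd, map_zero]

/-- If `T` fixes `P` and the `S`-orbit of `P` is free, the sum of the transported coefficients over
the `S`-orbit kills `σ h - h` and intertwines `τ` with `T`, so it sends an expression
`τ g - g + (σ h - h)` to `T b - b`. -/
theorem exists_of_fixed {T S : RingAut K[X]} (hTS : Commute T S)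
    (hTdeg : ∀ r, (T r).degree = r.degree) (hSdeg : ∀ r, (S r).degree = r.degree)
    {τ σ : RingAut (RatFunc K)} (hτ : ∀ r, τ (𝔦 r) = 𝔦 (T r)) (hσ : ∀ r, σ (𝔦 r) = 𝔦 (S r))
    {P : K[X]} (hP : Irreducible P) (hTP : T P = P)
    (hfree : ∀ j : ℤ, P ∣ (S ^ j) P → j = 0)
    {m : ℕ} {a : K[X]} (ha : a.degree < P.degree) {g h : RatFunc K}
    (H : 𝔦 a / 𝔦 P ^ (m + 1) = (τ g - g) + (σ h - h)) : ∃ b, a = T b - b := by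
  have hirr : ∀ j : ℤ, Irreducible ((S ^ j) P) :=
    fun j => (MulEquiv.irreducible_iff (S ^ j)).mpr hP
  have hinj : ∀ i j : ℤ, (S ^ i) P ∣ (S ^ j) P → i = j := by
    intro i j hij
    have := map_dvd (S ^ i)⁻¹ hij
    rw [← RingAut.mul_apply, inv_mul_cancel, RingAut.one_apply, ← RingAut.mul_apply, ← zpow_neg,
      ← zpow_add] at this
    have := hfree _ this
    omega
  have hfix : ∀ j : ℤ, T ((S ^ j) P) = (S ^ j) P := by
    intro j
    rw [← RingAut.mul_apply, (hTS.zpow_right j).eq, RingAut.mul_apply, hTP]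
  set G : RatFunc K → ℤ → K[X] := fun f j => (S ^ j)⁻¹ (coef ((S ^ j) P) m f) with hG
  have hfin : ∀ f, Function.HasFiniteSupport (G f) := by
    intro f
    refine (finite_coef hirr hinj m f).subset fun x hx => ?_
    simpa [hG] using hx
  have hfin2 : ∀ f f', Function.HasFiniteSupport (fun j => G f j - G f' j) :=
    fun f f' => (hfin f).sub (hfin f')
  have hGτ : ∀ f j, G (τ f) j = T (G f j) := by
    intro f j
    have := coef_map (hirr j) m T hTdeg τ hτ f
    rw [hfix] at this
    simp only [hG]
    rw [this, ← RingAut.mul_apply, ← RingAut.mul_apply, ((hTS.zpow_right j).inv_right).eq]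
  have hGσ : ∀ f j, G (σ f) j = G f (j - 1) := by
    intro f j
    have hS : S ^ j = S * S ^ (j - 1) := by
      rw [← zpow_one_add]
      congr 1
      ring
    simp only [hG]
    rw [hS, RingAut.mul_apply, coef_map (hirr _) m S hSdeg σ hσ, ← RingAut.mul_apply]
    congr 1
    group
  have hsumτ : ∀ f, ∑ᶠ j, G (τ f) j = T (∑ᶠ j, G f j) := by
    intro f
    simp only [hGτ]
    exact ((T : K[X] →+* K[X]).toAddMonoidHom.map_finsum (hfin f)).symm
  have hsumσ : ∀ f, ∑ᶠ j, G (σ f) j = ∑ᶠ j, G f j := by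
    intro f
    simp only [hGσ]
    exact finsum_comp_equiv (Equiv.subRight (1 : ℤ))
  have hsum : ∑ᶠ j, G ((τ g - g) + (σ h - h)) j = T (∑ᶠ j, G g j) - ∑ᶠ j, G g j := by
    have : ∀ j, G ((τ g - g) + (σ h - h)) j = (G (τ g) j - G g j) + (G (σ h) j - G h j) := by
      intro j
      simp only [hG, coef_add (hirr j), coef_sub (hirr j), map_add, map_sub]
    simp only [this]
    rw [finsum_add_distrib (hfin2 _ _) (hfin2 _ _),
      finsum_sub_distrib (hfin _) (hfin _), finsum_sub_distrib (hfin _) (hfin _), hsumτ, hsumσ,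
      sub_self, add_zero]
  refine ⟨∑ᶠ j, G g j, ?_⟩
  rw [← hsum, ← H, finsum_eq_single _ 0]
  · simp only [hG, zpow_zero, inv_one, RingAut.one_apply, coef_self hP m ha]
  · intro j hj
    have hnd : ¬ (S ^ j) P ∣ P ^ (m + 1) := fun hd => hj (hinj j 0 (by
      simpa using (hirr j).prime.dvd_of_dvd_pow hd))
    simp only [hG]
    rw [← map_pow, coef_of_not_dvd (hirr j) m hnd, map_zero]
end Telescoping

/-! ### Orbits of irreducible polynomials -/

section Orbit

lemma zpow_semiconj {A B : Type*} [CommRing A] [CommRing B] (e : A →+* B) {φ : RingAut B}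
    {ψ : RingAut A} (h : ∀ r, φ (e r) = e (ψ r)) (i : ℤ) (r : A) :
    (φ ^ i) (e r) = e ((ψ ^ i) r) := by
  induction i generalizing r with
  | zero => simp
  | succ n ih => rw [zpow_add_one, zpow_add_one, RingAut.mul_apply, h, ih, RingAut.mul_apply]
  | pred n ih =>
    have h' : φ⁻¹ (e r) = e (ψ⁻¹ r) := by
      have := h (ψ⁻¹ r)
      rw [← RingAut.mul_apply, mul_inv_cancel, RingAut.one_apply] at this
      rw [← this, ← RingAut.mul_apply, inv_mul_cancel, RingAut.one_apply]
    rw [zpow_sub_one, zpow_sub_one, RingAut.mul_apply, h', ih, RingAut.mul_apply]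

lemma zpow_eigen {A F : Type*} [CommRing A] [Field F] (e : A → F) {φ : RingAut A} {u : F}
    (hu : u ≠ 0) (h : ∀ r, e (φ r) = u * e r) (i : ℤ) (r : A) : e ((φ ^ i) r) = u ^ i * e r := by
  induction i generalizing r with
  | zero => simp
  | succ n ih => rw [zpow_add_one, zpow_add_one₀ hu, RingAut.mul_apply, ih, h]; ring
  | pred n ih =>
    have h' : e (φ⁻¹ r) = u⁻¹ * e r := by
      have := h (φ⁻¹ r)
      rw [← RingAut.mul_apply, mul_inv_cancel, RingAut.one_apply] at this
      rw [this]; field_simp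
    rw [zpow_sub_one, zpow_sub_one₀ hu, RingAut.mul_apply, ih, h']; ring

/-- The automorphism `X ↦ X + 1` of `R[X]`. -/
def shiftAut (R : Type*) [CommRing R] : RingAut R[X] := (taylorEquiv (1 : R)).toRingEquiv

lemma shiftAut_apply {R : Type*} [CommRing R] (p : R[X]) : shiftAut R p = taylor 1 p := rfl

lemma eval_shiftAut_zpow {K : Type*} [Field K] (j : ℤ) (p : K[X]) (s : K) :
    ((shiftAut K ^ j) p).eval s = p.eval (s + j) := by
  induction j generalizing p with
  | zero => simp
  | succ n ih =>
    rw [zpow_add_one, RingAut.mul_apply, ih, shiftAut_apply, taylor_eval]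
    push_cast; ring_nf
  | pred n ih =>
    have h' : ((shiftAut K)⁻¹ p) = taylor (-1) p := rfl
    rw [zpow_sub_one, RingAut.mul_apply, ih, h', taylor_eval]
    push_cast; ring_nf

/-- In characteristic zero a nonconstant polynomial divides none of its nontrivial integer shifts:
it would equal the shift, hence be periodic, hence take one value infinitely often. -/
lemma shiftAut_free {K : Type*} [Field K] [CharZero K] {P : K[X]} (hP : 0 < P.degree) {j : ℤ}
    (h : P ∣ (shiftAut K ^ j) P) : j = 0 := by
  by_contra hj
  have hP0 : P ≠ 0 := by rintro rfl; simp at hP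
  have hext : (shiftAut K ^ j) P = taylor (j : K) P := by
    have : Infinite K := inferInstance
    exact Polynomial.funext fun s => by rw [eval_shiftAut_zpow, taylor_eval]
  have heq : taylor (j : K) P = P := by
    rw [hext] at h
    by_contra hne
    refine sub_ne_zero.mpr hne (eq_zero_of_dvd_of_degree_lt (dvd_sub_self_right.mpr h) ?_)
    have := degree_sub_lt_left (degree_taylor P (j : K)) (by simpa using hP0)
      (leadingCoeff_taylor _ _)
    rwa [degree_taylor] at this
  have hconst : P = C (P.eval 0) := by
    refine eq_of_infinite_eval_eq _ _ ?_
    refine Set.infinite_of_injective_forall_mem (f := fun n : ℕ => (n : K) * j) ?_ ?_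
    · intro a b hab
      have : (j : K) ≠ 0 := by exact_mod_cast hj
      simpa [this] using hab
    · intro n
      simp only [Set.mem_ofPred_eq, eval_C]
      induction n with
      | zero => simp
      | succ n ih =>
        rw [← ih]
        conv_rhs => rw [← heq, taylor_eval]
        push_cast; ring_nf
  rw [hconst] at hP
  exact absurd hP (not_lt.mpr degree_C_le)

variable {k : Type*} [Field k]

/-- The automorphism `x ↦ q x` of `k[x]`. -/
def scaleAut {q : k} (hq : q ≠ 0) : RingAut k[X] :=
  letI := invertibleOfNonzero hq
  (algEquivCMulXAddC q 0).toRingEquiv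

lemma scaleAut_X {q : k} (hq : q ≠ 0) : scaleAut hq X = C q * X := by
  simp [scaleAut]

lemma scaleAut_C {q : k} (hq : q ≠ 0) (c : k) : scaleAut hq (C c) = C c := by
  simp [scaleAut]

/-- The automorphism `x ↦ q x` of `k[x][y]`, acting on the coefficients. -/
def xAut {q : k} (hq : q ≠ 0) : RingAut k[X][X] := mapEquiv (scaleAut hq)

/-- Write `d ∈ k[x, y]` as `∑ dₙ(y) xⁿ`; this is the leading coefficient of `dₙ`. -/
def xLead (n : ℕ) (d : k[X][X]) : k := ((Bivariate.swap d).coeff n).leadingCoeff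

/-- The exchange of the two variables, as a ring homomorphism. -/
def swapHom : k[X][X] →+* k[X][X] := (Bivariate.swap (R := k)).toRingEquiv

lemma xLead_xAut {q : k} (hq : q ≠ 0) (n : ℕ) (d : k[X][X]) :
    xLead n (xAut hq d) = q ^ n * xLead n d := by
  have key : swapHom.comp (xAut hq : k[X][X] →+* k[X][X]) =
      (compRingHom (C (C q) * X)).comp swapHom := by
    refine Polynomial.ringHom_ext' (Polynomial.ringHom_ext (fun c => ?_) ?_) ?_
    · change Bivariate.swap (xAut hq (C (C c))) = (Bivariate.swap (C (C c))).comp (C (C q) * X)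
      simp [xAut, scaleAut_C, Bivariate.swap_C_C]
    · change Bivariate.swap (xAut hq (C X)) = (Bivariate.swap (C X)).comp (C (C q) * X)
      simp [xAut, scaleAut_X, Bivariate.swap_C]
    · change Bivariate.swap (xAut hq X) = (Bivariate.swap X).comp (C (C q) * X)
      simp [xAut, Bivariate.swap_Y]
  have h : Bivariate.swap (xAut hq d) = (Bivariate.swap d).comp (C (C q) * X) := RingHom.congr_fun key d
  rw [xLead, h, comp_C_mul_X_coeff, ← C_pow, leadingCoeff_mul, leadingCoeff_C, mul_comm]
  rfl

lemma xLead_shiftAut (n : ℕ) (d : k[X][X]) : xLead n (shiftAut k[X] d) = xLead n d := by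
  have key : swapHom.comp (shiftAut k[X] : k[X][X] →+* k[X][X]) =
      (mapRingHom (shiftAut k : k[X] →+* k[X])).comp swapHom := by
    refine Polynomial.ringHom_ext' (Polynomial.ringHom_ext (fun c => ?_) ?_) ?_
    · change Bivariate.swap (taylor 1 (C (C c))) =
        (Bivariate.swap (C (C c))).map (shiftAut k : k[X] →+* k[X])
      simp [Bivariate.swap_C_C, shiftAut_apply]
    · change Bivariate.swap (taylor 1 (C X)) =
        (Bivariate.swap (C X)).map (shiftAut k : k[X] →+* k[X])
      simp [Bivariate.swap_C]
    · change Bivariate.swap (taylor 1 X) = (Bivariate.swap X).map (shiftAut k : k[X] →+* k[X])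
      simp [Bivariate.swap_Y, shiftAut_apply]
  have h : Bivariate.swap (shiftAut k[X] d) =
      (Bivariate.swap d).map (shiftAut k : k[X] →+* k[X]) := RingHom.congr_fun key d
  rw [xLead, h, coeff_map]
  exact leadingCoeff_taylor _ _

/-- An irreducible `d` of positive `y`-degree that divides `d(qⁱ x, y + j)` with `i ≠ 0`
lies in `k[y]`. Writing `d = ∑ dₙ(y) xⁿ` and comparing leading coefficients, `q ^ (n i)` does not
depend on `n` as long as `dₙ ≠ 0`, so only one `dₙ` is nonzero; irreducibility forces `n = 0`. -/
lemma mem_ky_of_dvd {q : k} (hq : q ≠ 0) (hqru : ∀ n : ℕ, 0 < n → q ^ n ≠ 1)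
    {d : k[X][X]} (hd : Irreducible d) (hdeg : 0 < d.degree) {i j : ℤ} (hi : i ≠ 0)
    (h : d ∣ (xAut hq ^ i * shiftAut k[X] ^ j) d) : ∃ e : k[X], d = e.map C := by
  have hd' : Irreducible ((xAut hq ^ i * shiftAut k[X] ^ j) d) :=
    (MulEquiv.irreducible_iff (xAut hq ^ i * shiftAut k[X] ^ j)).mpr hd
  obtain ⟨u, hu⟩ := hd.associated_of_dvd hd' h
  obtain ⟨c', hc', huc'⟩ := Polynomial.isUnit_iff.mp u.isUnit
  obtain ⟨c, hc, rfl⟩ := Polynomial.isUnit_iff.mp hc'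
  have hlead : ∀ n, xLead n d ≠ 0 → (q ^ n) ^ i = c := by
    intro n hn
    have h1 : xLead n ((xAut hq ^ i * shiftAut k[X] ^ j) d) = (q ^ n) ^ i * xLead n d := by
      rw [RingAut.mul_apply, zpow_eigen (xLead n) (pow_ne_zero n hq) (xLead_xAut hq n),
        zpow_eigen (xLead n) one_ne_zero (fun r => by rw [xLead_shiftAut, one_mul]), one_zpow,
        one_mul]
    have h2 : xLead n (d * C (C c)) = c * xLead n d := by
      rw [xLead, map_mul, Bivariate.swap_C_C, coeff_mul_C, leadingCoeff_mul, leadingCoeff_C,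
        mul_comm]
      rfl
    rw [← hu, ← huc', h2] at h1
    exact (mul_right_cancel₀ hn h1).symm
  have huniq : ∀ n l, n < l → xLead n d ≠ 0 → xLead l d ≠ 0 → False := by
    intro n l hnl hn hl
    have h1 : q ^ ((n : ℤ) * i) = q ^ ((l : ℤ) * i) := by
      rw [zpow_mul, zpow_mul, zpow_natCast, zpow_natCast, hlead n hn, hlead l hl]
    have h2 : q ^ (((l : ℤ) - n) * i) = 1 := by
      rw [sub_mul, zpow_sub₀ hq, h1, div_self (zpow_ne_zero _ hq)]
    have h3 : ((l : ℤ) - n) * i ≠ 0 := mul_ne_zero (by omega) hi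
    refine hqru _ (Int.natAbs_pos.mpr h3) ?_
    rcases Int.natAbs_eq (((l : ℤ) - n) * i) with h4 | h4
    · rw [h4, zpow_natCast] at h2
      exact h2
    · rw [h4, zpow_neg, zpow_natCast] at h2
      exact inv_eq_one.mp h2
  have hcoeff : ∀ n, xLead n d ≠ 0 ↔ (Bivariate.swap d).coeff n ≠ 0 := fun n => by
    simp [xLead]
  have hpos : ∀ n, 0 < n → xLead n d = 0 := by
    intro n hn
    by_contra hne
    have hX : X ∣ Bivariate.swap d := by
      rw [X_dvd_iff]
      by_contra h0
      exact huniq 0 n hn ((hcoeff 0).mpr h0) hne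
    obtain ⟨s, hs⟩ := hX
    have hs' : d = C X * Bivariate.swap s := by
      rw [← Bivariate.swap_swap_apply d, hs, map_mul, Bivariate.swap_Y]
    have hXu : ¬ IsUnit (C X : k[X][X]) := by
      rw [isUnit_C]
      exact not_isUnit_X
    have hsu := (hd.isUnit_or_isUnit hs').resolve_left hXu
    obtain ⟨r, -, hr⟩ := Polynomial.isUnit_iff.mp hsu
    rw [hs', ← hr, ← C_mul] at hdeg
    exact absurd hdeg (not_lt.mpr degree_C_le)
  refine ⟨(Bivariate.swap d).coeff 0, ?_⟩
  rw [← Bivariate.swap_C, ← Bivariate.swap_swap_apply d,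
    Bivariate.swap_swap_apply (Bivariate.swap d)]
  congr 1
  ext1 n
  rcases Nat.eq_zero_or_pos n with rfl | hn
  · simp
  · rw [coeff_C_of_ne_zero hn.ne']
    by_contra hne
    exact ((hcoeff n).mpr hne) (hpos n hn)
end Orbit

/-! ### The action on `k(x)[y]` and the criterion -/

section Main
variable {k : Type*} [Field k]

/-- `x ↦ q x` on `k(x)`. -/
def ratScale {q : k} (hq : q ≠ 0) : RingAut (RatFunc k) :=
  IsFractionRing.ringEquivOfRingEquiv (scaleAut hq)

lemma ratScale_algebraMap {q : k} (hq : q ≠ 0) (r : k[X]) :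
    ratScale hq (algebraMap k[X] (RatFunc k) r) = algebraMap k[X] (RatFunc k) (scaleAut hq r) :=
  IsFractionRing.ringEquivOfRingEquiv_algebraMap _ _

/-- `x ↦ q x` on `k(x)[y]`, acting on the coefficients. -/
def tAut {q : k} (hq : q ≠ 0) : RingAut (RatFunc k)[X] := mapEquiv (ratScale hq)

lemma tAut_apply {q : k} (hq : q ≠ 0) (r : (RatFunc k)[X]) :
    tAut hq r = r.map (ratScale hq : RatFunc k →+* RatFunc k) := rfl

lemma degree_tAut {q : k} (hq : q ≠ 0) (r : (RatFunc k)[X]) : (tAut hq r).degree = r.degree :=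
  degree_map_eq_of_injective (ratScale hq).injective r

lemma degree_shiftAut {K : Type*} [Field K] (r : K[X]) : (shiftAut K r).degree = r.degree :=
  degree_taylor r 1

lemma tAut_commute {q : k} (hq : q ≠ 0) : Commute (tAut hq) (shiftAut (RatFunc k)) := by
  refine RingEquiv.ext fun r => ?_
  change (taylor 1 r).map _ = taylor 1 (r.map (ratScale hq : RatFunc k →+* RatFunc k))
  rw [taylor_apply, taylor_apply, Polynomial.map_comp]
  simp

lemma tAut_PP {q : k} (hq : q ≠ 0) (d : k[X][X]) : tAut hq (PP k d) = PP k (xAut hq d) := by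
  change (d.map _).map _ = (d.map (scaleAut hq : k[X] →+* k[X])).map _
  rw [Polynomial.map_map, Polynomial.map_map]
  congr 1
  exact RingHom.ext (ratScale_algebraMap hq)

lemma shiftAut_PP (d : k[X][X]) :
    shiftAut (RatFunc k) (PP k d) = PP k (shiftAut k[X] d) := by
  change taylor 1 (d.map _) = (taylor 1 d).map _
  rw [taylor_apply, taylor_apply, Polynomial.map_comp]
  simp

/-- Ring homomorphisms from `k(x)[y]` to `k(x,y)` are determined on `k`, `x` and `y`. -/
lemma ringHom_ext_F2 {φ ψ : (RatFunc k)[X] →+* F2 k}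
    (hc : ∀ c : k, φ (C (RatFunc.C c)) = ψ (C (RatFunc.C c)))
    (hx : φ (C RatFunc.X) = ψ (C RatFunc.X)) (hy : φ X = ψ X) : φ = ψ := by
  refine Polynomial.ringHom_ext' ?_ hy
  refine IsLocalization.ringHom_ext (nonZeroDivisors k[X]) ?_
  refine Polynomial.ringHom_ext (fun c => ?_) ?_
  · simpa using hc c
  · simpa using hx

lemma tau_FP {q : k} (hq : q ≠ 0) {τ : F2 k ≃+* F2 k} (hτ : IsQShiftX q τ)
    (r : (RatFunc k)[X]) : τ (FP k r) = FP k (tAut hq r) := by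
  obtain ⟨h1, h2, h3⟩ := hτ
  have key : (τ : F2 k →+* F2 k).comp (FP k) =
      (FP k).comp (tAut hq : (RatFunc k)[X] →+* (RatFunc k)[X]) := by
    refine ringHom_ext_F2 (fun c => ?_) ?_ ?_
    · have hC : tAut hq (C (RatFunc.C c)) = C (RatFunc.C c) := by
        have := ratScale_algebraMap hq (C c)
        rw [scaleAut_C, RatFunc.algebraMap_C] at this
        simp [tAut_apply, this]
      have hFc : FP k (C (RatFunc.C c)) = Fc k c := RatFunc.algebraMap_C _
      change τ (FP k (C (RatFunc.C c))) = FP k (tAut hq (C (RatFunc.C c)))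
      rw [hC, hFc, h1]
    · have hX : tAut hq (C RatFunc.X) = C (RatFunc.C q) * C RatFunc.X := by
        have := ratScale_algebraMap hq X
        rw [scaleAut_X, map_mul, RatFunc.algebraMap_C, RatFunc.algebraMap_X] at this
        simp [tAut_apply, this]
      have hFx : FP k (C RatFunc.X) = Fx k := RatFunc.algebraMap_C _
      have hFc : FP k (C (RatFunc.C q)) = Fc k q := RatFunc.algebraMap_C _
      change τ (FP k (C RatFunc.X)) = FP k (tAut hq (C RatFunc.X))
      rw [hX, map_mul, hFc, hFx, h3]
    · have hFy : FP k X = Fy k := RatFunc.algebraMap_X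
      change τ (FP k X) = FP k (tAut hq X)
      rw [tAut_apply, Polynomial.map_X, hFy, h2]
  exact RingHom.congr_fun key r

lemma sigma_FP {σ : F2 k ≃+* F2 k} (hσ : IsShiftY σ)
    (r : (RatFunc k)[X]) : σ (FP k r) = FP k (shiftAut (RatFunc k) r) := by
  obtain ⟨h1, h2, h3⟩ := hσ
  have key : (σ : F2 k →+* F2 k).comp (FP k) =
      (FP k).comp (shiftAut (RatFunc k) : (RatFunc k)[X] →+* (RatFunc k)[X]) := by
    refine ringHom_ext_F2 (fun c => ?_) ?_ ?_
    · have hFc : FP k (C (RatFunc.C c)) = Fc k c := RatFunc.algebraMap_C _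
      change σ (FP k (C (RatFunc.C c))) = FP k (taylor 1 (C (RatFunc.C c)))
      rw [taylor_C, hFc, h1]
    · have hFx : FP k (C RatFunc.X) = Fx k := RatFunc.algebraMap_C _
      change σ (FP k (C RatFunc.X)) = FP k (taylor 1 (C RatFunc.X))
      rw [taylor_C, hFx, h2]
    · have hFy : FP k X = Fy k := RatFunc.algebraMap_X
      change σ (FP k X) = FP k (taylor 1 X)
      rw [taylor_X, map_add, C_1, map_one, hFy, h3]
  exact RingHom.congr_fun key r

lemma xAut_PY {q : k} (hq : q ≠ 0) (e : k[X]) : xAut hq (PY k e) = PY k e := by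
  change (e.map C).map (scaleAut hq : k[X] →+* k[X]) = e.map C
  rw [Polynomial.map_map]
  congr 1
  ext1 c
  exact scaleAut_C hq c

end Main

/-- Lemma 4: let `q ∈ k \ {0}` not be a root of unity, and let
`f = a/d^m` with `m ≥ 1`, `d ∈ k[x,y]` irreducible, and `a ∈ k(x)[y]` nonzero with
`deg_y(a) < deg_y(d)`. Then `f` is exact with respect to `(Δ_{x,q}, Δ_y)`, i.e.
`f = Δ_{x,q}(g) + Δ_y(h)` for some `g, h ∈ k(x,y)`, iff `d ∈ k[y]` and
`a = Δ_{x,q}(b)` for some `b ∈ k(x)[y]`. -/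
theorem stmt14 {k : Type*} [Field k] [CharZero k]
    (q : k) (hq : q ≠ 0) (hqru : NotRootOfUnity q)
    (τ : F2 k ≃+* F2 k) (hτ : IsQShiftX q τ)
    (σy : F2 k ≃+* F2 k) (hσy : IsShiftY σy)
    (m : ℕ) (hm : 1 ≤ m)
    (d : Polynomial (Polynomial k)) (hd : Irreducible d)
    (a : Polynomial (RatFunc k)) (ha : a ≠ 0) (hdeg : a.degree < d.degree)
    (f : F2 k) (hf : f = FP k a / FPP k d ^ m) :
    (∃ g h : F2 k, f = (τ g - g) + (σy h - h)) ↔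
    ((∃ e : Polynomial k, d = PY k e) ∧
      ∃ b : Polynomial (RatFunc k), FP k a = τ (FP k b) - FP k b) := by
  obtain ⟨n, rfl⟩ : ∃ n, m = n + 1 := ⟨m - 1, by omega⟩
  have hdpos : 0 < d.degree := (zero_le_degree_iff.mpr ha).trans_lt hdeg
  have hPdeg : (PP k d).degree = d.degree :=
    degree_map_eq_of_injective (RatFunc.algebraMap_injective k) d
  have hprim : d.IsPrimitive := hd.isPrimitive (natDegree_pos_iff_degree_pos.mpr hdpos).ne'
  constructor
  · rintro ⟨g, h, hgh⟩
    have hP : Irreducible (PP k d) :=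
      (hprim.irreducible_iff_irreducible_map_fraction_map (K := RatFunc k)).mp hd
    have haP : a.degree < (PP k d).degree := hPdeg ▸ hdeg
    have hSfree : ∀ j : ℤ, PP k d ∣ (shiftAut (RatFunc k) ^ j) (PP k d) → j = 0 :=
      fun j hj => shiftAut_free (hPdeg ▸ hdpos) hj
    have H := hf.symm.trans hgh
    have hdky : ∃ e : k[X], d = PY k e := by
      by_contra hne
      refine ha (eq_zero_of_free_orbit (tAut_commute hq) (degree_tAut hq) degree_shiftAut
        (tau_FP hq hτ) (sigma_FP hσy) hP (fun i j hij => ?_) haP H)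
      by_cases hi : i = 0
      · subst hi
        rw [zpow_zero, one_mul] at hij
        exact ⟨rfl, hSfree j hij⟩
      · exfalso
        rw [RingAut.mul_apply, zpow_semiconj (PP k) shiftAut_PP, zpow_semiconj (PP k) (tAut_PP hq),
          ← RingAut.mul_apply] at hij
        exact hne (mem_ky_of_dvd hq hqru hd hdpos hi
          (hprim.dvd_of_fraction_map_dvd_fraction_map (K := RatFunc k) hij))
    refine ⟨hdky, ?_⟩
    obtain ⟨e, he⟩ := hdky
    obtain ⟨b, hb⟩ := exists_of_fixed (tAut_commute hq) (degree_tAut hq) degree_shiftAut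
        (tau_FP hq hτ) (sigma_FP hσy) hP (by rw [tAut_PP, he, xAut_PY]) hSfree haP H
    exact ⟨b, by rw [tau_FP hq hτ, ← map_sub, ← hb]⟩
  · rintro ⟨⟨e, he⟩, b, hb⟩
    refine ⟨FP k b / FPP k d ^ (n + 1), 0, ?_⟩
    have hfix : τ (FPP k d) = FPP k d := by
      rw [FPP, RingHom.comp_apply, tau_FP hq hτ, tAut_PP, he, xAut_PY]
    rw [hf, map_div₀, map_pow, hfix, hb]
    simp [sub_div]
end
end
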